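/- arXiv:2412.04406 — 3 statements merged into one kernel-verified Lean document; each statement's English description precedes it below -/
import Mathlib

section
/- Let d ≥ 2 be an integer, 1 < p < ∞, and μ ≥ 0, ν ≥ 0 real numbers. Set a = μ + 1 + d/2 − d/p and b = d/p − d/2 + 1 + ν. Then there exists a constant C = C(μ, ν, d, p) > 0 such that for every Lipschitz function f : (0,∞) → ℂ with compact support in (0,∞), the function Tf defined by Tf(r) = ∫_{1/2}^{1} ( t^a · f(rt) − t^b · f(r/t) ) / ( (1 − t²) · t ) dt (an absolutely convergent integral for every r > 0) satisfies ( ∫₀^∞ |Tf(r)|^p dr/r )^{1/p} ≤ C · ( ∫₀^∞ |f(r)|^p dr/r )^{1/p}. -/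
section SingularIntegral

open MeasureTheory Set Filter Topology
open scoped ENNReal NNReal Real

theorem exists_abs_im_rpow_le {p : ℝ} (hp : 1 < p) (hp2 : p ≤ 2) :
    ∃ A B : ℝ, 0 ≤ A ∧ 0 ≤ B ∧ ∀ z : ℂ, 0 < z.re →
      |z.im| ^ p ≤ A * z.re ^ p - B * (z ^ (p : ℂ)).re := by
  set θ₀ : ℝ := π * (1 + p) / (4 * p) with hθ₀
  have hpi := Real.pi_pos
  have hpθ : p * θ₀ = π * (1 + p) / 4 := by rw [hθ₀]; field_simp
  have hθ₀pos : 0 < θ₀ := by positivity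
  have hθ₀lt : θ₀ < π / 2 := by
    rw [hθ₀, div_lt_div_iff₀ (by positivity) (by norm_num)]
    nlinarith
  have hcos0 : 0 < Real.cos θ₀ := Real.cos_pos_of_mem_Ioo ⟨by linarith, hθ₀lt⟩
  have hc : Real.cos (p * θ₀) < 0 := by
    rw [hpθ]
    apply Real.cos_neg_of_pi_div_two_lt_of_lt <;> nlinarith
  set c := -Real.cos (p * θ₀) with hcdef
  have hcpos : 0 < c := by linarith
  refine ⟨(1 + 1 / c) / Real.cos θ₀ ^ p, 1 / c, by positivity, by positivity, fun z hz => ?_⟩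
  have key : |Real.sin z.arg| ^ p ≤ (1 + 1 / c) / Real.cos θ₀ ^ p * Real.cos z.arg ^ p
      - 1 / c * Real.cos (z.arg * p) := by
    have harg : |z.arg| < π / 2 := Complex.abs_arg_lt_pi_div_two_iff.2 (Or.inl hz)
    have h1 : |Real.sin z.arg| ^ p ≤ 1 :=
      Real.rpow_le_one (abs_nonneg _) (Real.abs_sin_le_one _) (by linarith)
    have hcos : 0 ≤ Real.cos z.arg := Real.cos_nonneg_of_neg_pi_div_two_le_of_le
      (by linarith [neg_abs_le z.arg]) (by linarith [le_abs_self z.arg])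
    have hcosp : Real.cos (z.arg * p) = Real.cos (p * |z.arg|) := by
      rw [← Real.cos_abs, abs_mul, abs_of_pos (by linarith : 0 < p), mul_comm]
    rcases le_total θ₀ |z.arg| with h | h
    · have h2 : Real.cos (z.arg * p) ≤ -c := by
        rw [hcosp, hcdef, neg_neg]
        apply Real.cos_le_cos_of_nonneg_of_le_pi (by positivity) (by nlinarith)
        gcongr
      have h3 : 0 ≤ (1 + 1 / c) / Real.cos θ₀ ^ p * Real.cos z.arg ^ p := by positivity
      have h4 : 1 / c * Real.cos (z.arg * p) ≤ 1 / c * (-c) := by gcongr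
      have h5 : 1 / c * (-c) = -1 := by field_simp
      linarith
    · have h2 : Real.cos θ₀ ≤ Real.cos z.arg := by
        rw [← Real.cos_abs z.arg]
        exact Real.cos_le_cos_of_nonneg_of_le_pi (abs_nonneg _) (by linarith) h
      have h3 : 1 + 1 / c ≤ (1 + 1 / c) / Real.cos θ₀ ^ p * Real.cos z.arg ^ p := by
        rw [div_mul_eq_mul_div, le_div_iff₀ (by positivity)]
        gcongr
      have h4 : 1 / c * Real.cos (z.arg * p) ≤ 1 / c * 1 := by
        gcongr; exact Real.cos_le_one _
      linarith
  have hre : z.re ^ p = ‖z‖ ^ p * Real.cos z.arg ^ p := by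
    have hcos : 0 ≤ Real.cos z.arg := by
      rw [Complex.cos_arg (by rintro rfl; simp at hz)]; positivity
    rw [← Real.mul_rpow (norm_nonneg _) hcos, Complex.norm_mul_cos_arg]
  have him : |z.im| ^ p = ‖z‖ ^ p * |Real.sin z.arg| ^ p := by
    rw [← Real.mul_rpow (norm_nonneg _) (abs_nonneg _), ← Complex.norm_mul_sin_arg z, abs_mul,
      abs_norm]
  have hpow : (z ^ (p : ℂ)).re = ‖z‖ ^ p * Real.cos (z.arg * p) := by
    rw [Complex.cpow_ofReal, Complex.re_ofReal_mul]
    simp only [Complex.add_re, Complex.ofReal_re, Complex.re_ofReal_mul, Complex.I_re, mul_zero,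
      add_zero]
  rw [hre, him, hpow]
  calc _ ≤ ‖z‖ ^ p * _ := mul_le_mul_of_nonneg_left key (by positivity)
    _ = _ := by ring

theorem lintegral_conv_rpow_le {p : ℝ} (hp : 1 < p) {k f : ℝ → ℝ≥0∞} (hk : Measurable k)
    (hf : AEMeasurable f) :
    ∫⁻ x, (∫⁻ t, k (x - t) * f t) ^ p ≤ (∫⁻ u, k u) ^ p * ∫⁻ t, f t ^ p := by
  have hp0 : 0 < p := by linarith
  set q := p.conjExponent
  have hpq : p.HolderConjugate q := Real.HolderConjugate.conjExponent hp
  have hkint (x : ℝ) : ∫⁻ t, k (x - t) = ∫⁻ u, k u := lintegral_sub_left_eq_self k x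
  have step (x : ℝ) : (∫⁻ t, k (x - t) * f t) ^ p
      ≤ (∫⁻ u, k u) ^ (p - 1) * ∫⁻ t, k (x - t) * f t ^ p := by
    have hkx : Measurable fun t => k (x - t) := by fun_prop
    have h := ENNReal.lintegral_mul_le_Lp_mul_Lq volume hpq.symm
      (f := fun t => k (x - t) ^ (1 / q)) (g := fun t => k (x - t) ^ (1 / p) * f t)
      (by fun_prop) (by fun_prop)
    have e1 : ∀ t, k (x - t) ^ (1 / q) * (k (x - t) ^ (1 / p) * f t) = k (x - t) * f t := by
      intro t
      rw [← mul_assoc, ← ENNReal.rpow_add_of_nonneg _ _ hpq.symm.one_div_nonneg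
        hpq.one_div_nonneg]
      have := hpq.symm.one_div_add_one_div
      rw [this]; simp
    have e2 : ∀ t, (k (x - t) ^ (1 / q)) ^ q = k (x - t) := by
      intro t
      rw [← ENNReal.rpow_mul, one_div_mul_cancel hpq.symm.ne_zero, ENNReal.rpow_one]
    have e3 : ∀ t, (k (x - t) ^ (1 / p) * f t) ^ p = k (x - t) * f t ^ p := by
      intro t
      rw [ENNReal.mul_rpow_of_nonneg _ _ hp0.le, ← ENNReal.rpow_mul,
        one_div_mul_cancel hp0.ne', ENNReal.rpow_one]
    simp only [Pi.mul_apply, e1, e2, e3, hkint] at h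
    calc _ ≤ ((∫⁻ u, k u) ^ (1 / q) * (∫⁻ t, k (x - t) * f t ^ p) ^ (1 / p)) ^ p := by gcongr
      _ = _ := by
        rw [ENNReal.mul_rpow_of_nonneg _ _ hp0.le, ← ENNReal.rpow_mul, ← ENNReal.rpow_mul,
          one_div_mul_cancel hp0.ne', ENNReal.rpow_one]
        congr 2
        have h1 : 1 / q = 1 - 1 / p := by linarith [hpq.symm.one_div_add_one_div]
        rw [h1]; field_simp
  calc _ ≤ ∫⁻ x, (∫⁻ u, k u) ^ (p - 1) * ∫⁻ t, k (x - t) * f t ^ p := lintegral_mono step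
    _ = (∫⁻ u, k u) ^ (p - 1) * ∫⁻ x, ∫⁻ t, k (x - t) * f t ^ p := by
      rw [lintegral_const_mul'']
      apply AEMeasurable.lintegral_prod_right' (f := fun z : ℝ × ℝ => k (z.1 - z.2) * f z.2 ^ p)
      apply AEMeasurable.mul (by fun_prop)
      exact (hf.comp_snd).pow_const p
    _ = (∫⁻ u, k u) ^ (p - 1) * ∫⁻ t, ∫⁻ x, k (x - t) * f t ^ p := by
      rw [lintegral_lintegral_swap]
      apply AEMeasurable.mul (hk.comp (measurable_fst.sub measurable_snd)).aemeasurable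
      exact (hf.comp_snd).pow_const p
    _ = (∫⁻ u, k u) ^ (p - 1) * ((∫⁻ u, k u) * ∫⁻ t, f t ^ p) := by
      congr 1
      rw [← lintegral_const_mul'' _ (hf.pow_const p)]
      congr 1; ext t
      rw [lintegral_mul_const _ (by fun_prop), lintegral_sub_right_eq_self k t]
    _ = _ := by
      rw [← mul_assoc]
      congr 1
      nth_rewrite 2 [← ENNReal.rpow_one (∫⁻ u, k u)]
      rw [← ENNReal.rpow_add_of_nonneg _ _ (by linarith) (by norm_num)]
      simp

/-- The Cauchy transform `∫ f(t) · i / (z - t) dt`. -/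
noncomputable def cauchyTransform (f : ℝ → ℝ) (z : ℂ) : ℂ :=
  ∫ t, (f t : ℂ) * (Complex.I / (z - t))

/-- The (unnormalised) Poisson transform of `f` at height `y`. -/
noncomputable def poissonTransform (y : ℝ) (f : ℝ → ℝ) (x : ℝ) : ℝ :=
  ∫ t, y / ((x - t) ^ 2 + y ^ 2) * f t

/-- The (unnormalised) conjugate Poisson transform of `f` at height `y`. -/
noncomputable def conjPoissonTransform (y : ℝ) (f : ℝ → ℝ) (x : ℝ) : ℝ :=
  ∫ t, (x - t) / ((x - t) ^ 2 + y ^ 2) * f t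

theorem sub_ofReal_ne_zero {z : ℂ} (hz : 0 < z.im) (t : ℝ) : z - t ≠ 0 := by
  intro h
  have := congrArg Complex.im h
  simp at this
  exact hz.ne' this

theorem im_le_norm_sub_ofReal {z : ℂ} (hz : 0 < z.im) (t : ℝ) : z.im ≤ ‖z - t‖ := by
  have := Complex.abs_im_le_norm (z - t)
  simp only [Complex.sub_im, Complex.ofReal_im, sub_zero, abs_of_pos hz] at this
  exact this

theorem integrable_cauchyTransform {f : ℝ → ℝ} (hf : Integrable f) {z : ℂ} (hz : 0 < z.im) :
    Integrable fun t : ℝ => (f t : ℂ) * (Complex.I / (z - t)) := by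
  refine hf.ofReal.mul_bdd (c := 1 / z.im) (Measurable.aestronglyMeasurable (by fun_prop))
    (ae_of_all _ fun t => ?_)
  rw [norm_div, Complex.norm_I]
  exact one_div_le_one_div_of_le hz (im_le_norm_sub_ofReal hz t)

theorem cauchyTransform_eq {f : ℝ → ℝ} (hf : Integrable f) {y : ℝ} (hy : 0 < y) (x : ℝ) :
    (cauchyTransform f (x + y * Complex.I)).re = poissonTransform y f x ∧
    (cauchyTransform f (x + y * Complex.I)).im = conjPoissonTransform y f x := by
  have hintegrable := integrable_cauchyTransform hf (z := x + y * Complex.I) (by simpa using hy)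
  constructor
  · have h := integral_re hintegrable
    simp only [RCLike.re_to_complex] at h
    rw [cauchyTransform, ← h, poissonTransform]
    congr 1; ext t
    simp [Complex.div_re, Complex.normSq_apply]
    ring
  · have h := integral_im hintegrable
    simp only [RCLike.im_to_complex] at h
    rw [cauchyTransform, ← h, conjPoissonTransform]
    congr 1; ext t
    simp [Complex.div_im, Complex.normSq_apply]
    rw [mul_comm]
    ring_nf

theorem integrable_poissonTransform {f : ℝ → ℝ} (hf : Integrable f) {y : ℝ} (hy : 0 < y) (x : ℝ) :
    Integrable fun t => y / ((x - t) ^ 2 + y ^ 2) * f t := by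
  refine hf.bdd_mul (c := y / y ^ 2)
    (Measurable.aestronglyMeasurable (by fun_prop))
    (ae_of_all _ fun t => ?_)
  rw [Real.norm_of_nonneg (by positivity)]
  gcongr
  nlinarith [sq_nonneg (x - t)]

theorem norm_conjKernel_le {y : ℝ} (hy : 0 < y) (u : ℝ) : ‖u / (u ^ 2 + y ^ 2)‖ ≤ 1 / y := by
  rw [norm_div, Real.norm_eq_abs, Real.norm_of_nonneg (by positivity),
    div_le_div_iff₀ (by positivity) hy]
  nlinarith [sq_abs u, sq_nonneg (|u| - y), abs_nonneg u]

theorem integrable_conjPoissonTransform {f : ℝ → ℝ} (hf : Integrable f) {y : ℝ} (hy : 0 < y)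
    (x : ℝ) : Integrable fun t => (x - t) / ((x - t) ^ 2 + y ^ 2) * f t :=
  hf.bdd_mul (c := 1 / y) (Measurable.aestronglyMeasurable (by fun_prop))
    (ae_of_all _ fun t => norm_conjKernel_le hy _)

theorem cauchyTransform_re_pos {f : ℝ → ℝ} (hf : Integrable f) (hf0 : ∀ t, 0 ≤ f t)
    (hne : ¬ f =ᵐ[volume] 0) {z : ℂ} (hz : 0 < z.im) : 0 < (cauchyTransform f z).re := by
  have e : z = z.re + z.im * Complex.I := (Complex.re_add_im z).symm
  rw [e, (cauchyTransform_eq hf hz z.re).1, poissonTransform,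
    integral_pos_iff_support_of_nonneg (fun t => mul_nonneg (by positivity) (hf0 t))
      (integrable_poissonTransform hf hz _)]
  have : Function.support (fun t => z.im / ((z.re - t) ^ 2 + z.im ^ 2) * f t)
      = Function.support f := by
    ext t
    have : z.im / ((z.re - t) ^ 2 + z.im ^ 2) ≠ 0 := by positivity
    simp only [Function.mem_support, ne_eq, mul_eq_zero, this, false_or]
  rw [this, pos_iff_ne_zero]
  intro h
  exact hne h

theorem differentiableAt_cauchyTransform {f : ℝ → ℝ} (hf : Integrable f) {z : ℂ}
    (hz : 0 < z.im) : DifferentiableAt ℂ (cauchyTransform f) z := by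
  have hs : {w : ℂ | z.im / 2 < w.im} ∈ 𝓝 z :=
    (isOpen_lt continuous_const Complex.continuous_im).mem_nhds (by simp; linarith)
  refine (hasDerivAt_integral_of_dominated_loc_of_deriv_le (𝕜 := ℂ) (μ := volume) (x₀ := z)
    (F := fun w t => (f t : ℂ) * (Complex.I / (w - t)))
    (F' := fun w t => (f t : ℂ) * (-Complex.I / (w - t) ^ 2))
    (bound := fun t => ‖f t‖ * (1 / (z.im / 2) ^ 2)) hs ?_ ?_ ?_ ?_ ?_ ?_).2.differentiableAt
  · refine Eventually.of_forall fun w => ?_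
    exact hf.ofReal.aestronglyMeasurable.mul
      (Measurable.aestronglyMeasurable (by fun_prop))
  · exact integrable_cauchyTransform hf hz
  · exact hf.ofReal.aestronglyMeasurable.mul
      (Measurable.aestronglyMeasurable (by fun_prop))
  · refine ae_of_all _ fun t w hw => ?_
    have hw' : z.im / 2 < w.im := hw
    rw [norm_mul, norm_div, norm_neg, Complex.norm_I, norm_pow, Complex.norm_real]
    have := im_le_norm_sub_ofReal (by linarith : 0 < w.im) t
    gcongr
    linarith
  · exact hf.norm.mul_const _
  · refine ae_of_all _ fun t w hw => ?_
    have hw' : z.im / 2 < w.im := hw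
    have hne := sub_ofReal_ne_zero (by linarith : 0 < w.im) t
    apply HasDerivAt.const_mul
    have h1 : HasDerivAt (fun w : ℂ => w - t) 1 w := (hasDerivAt_id w).sub_const _
    simp only [div_eq_mul_inv]
    convert (h1.fun_inv hne).const_mul Complex.I using 1
    ring

theorem norm_cauchyTransform_le {f : ℝ → ℝ} (hf : Integrable f) {N R : ℝ} (hN0 : 0 ≤ N)
    (hN : ∀ t, N < |t| → f t = 0) (hR : N < R) {z : ℂ} (hz : R ≤ |z.re| ∨ R ≤ |z.im|) :
    ‖cauchyTransform f z‖ ≤ (∫ t, ‖f t‖) / (R - N) := by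
  rw [← integral_div]
  refine norm_integral_le_of_norm_le (hf.norm.div_const _) (ae_of_all _ fun t => ?_)
  rcases lt_or_ge N |t| with h | h
  · simp [hN t h]
  · rw [norm_mul, norm_div, Complex.norm_I, Complex.norm_real, mul_one_div]
    have hdist : R - N ≤ ‖z - t‖ := by
      rcases hz with hz | hz
      · have h1 := Complex.abs_re_le_norm (z - t)
        simp only [Complex.sub_re, Complex.ofReal_re] at h1
        have := abs_sub_abs_le_abs_sub z.re t
        linarith
      · have h1 := Complex.abs_im_le_norm (z - t)
        simp only [Complex.sub_im, Complex.ofReal_im, sub_zero] at h1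
        linarith
    have : 0 < R - N := by linarith
    gcongr

theorem tendsto_integral_cauchyTransform_cpow {f : ℝ → ℝ} (hf : Integrable f)
    (hf0 : ∀ t, 0 ≤ f t) (hne : ¬ f =ᵐ[volume] 0) {N : ℝ} (hN0 : 0 ≤ N)
    (hN : ∀ t, N < |t| → f t = 0)
    {p : ℝ} (hp : 1 < p) {y : ℝ} (hy : 0 < y) :
    Tendsto (fun R : ℝ => ∫ x in (-R)..R, cauchyTransform f (x + y * Complex.I) ^ (p : ℂ))
      atTop (𝓝 0) := by
  set G : ℂ → ℂ := fun z => cauchyTransform f z ^ (p : ℂ) with hG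
  set M := ∫ t, ‖f t‖ with hM
  have hM0 : 0 ≤ M := integral_nonneg fun t => norm_nonneg _
  have hbound : ∀ R, N < R → ∀ z : ℂ, 0 < z.im → (R ≤ |z.re| ∨ R ≤ |z.im|) →
      ‖G z‖ ≤ (M / (R - N)) ^ p := by
    intro R hR z hz hz'
    have hF := cauchyTransform_re_pos hf hf0 hne hz
    have hF0 : cauchyTransform f z ≠ 0 := by intro h; rw [h] at hF; simp at hF
    simp only [hG]
    rw [Complex.norm_cpow_real]
    have := norm_cauchyTransform_le hf hN0 hN hR hz'
    gcongr
  have hrect : ∀ R, 1 < R → 2 * N < R →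
      ‖∫ x in (-R)..R, G (x + y * Complex.I)‖ ≤ 4 * R * (M / (R - N)) ^ p := by
    intro R hR1 hR2
    have hRN : N < R := by linarith
    have h := Complex.integral_boundary_rect_eq_zero_of_differentiableOn G
      (⟨-R, y⟩ : ℂ) (⟨R, y + R⟩ : ℂ) ?_
    · simp only at h
      have i1 : ‖∫ x in (-R)..R, G (x + ((y + R : ℝ) : ℂ) * Complex.I)‖
          ≤ (M / (R - N)) ^ p * |R - -R| := by
        refine intervalIntegral.norm_integral_le_of_norm_le_const fun x _ => ?_
        refine hbound R hRN _ (by simp; linarith) ?_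
        right
        simp only [Complex.add_im, Complex.ofReal_im, Complex.mul_im, Complex.ofReal_re,
          Complex.I_im, Complex.I_re, mul_one, mul_zero, add_zero, zero_add]
        rw [abs_of_pos (by linarith)]
        linarith
      have i2 : ‖∫ t in y..(y + R), G ((R : ℂ) + t * Complex.I)‖
          ≤ (M / (R - N)) ^ p * |y + R - y| := by
        refine intervalIntegral.norm_integral_le_of_norm_le_const fun x hx => ?_
        rw [uIoc_of_le (by linarith)] at hx
        refine hbound R hRN _ (by simp; linarith [hx.1]) ?_
        left; simp; exact le_abs_self R
      have i3 : ‖∫ t in y..(y + R), G (((-R : ℝ) : ℂ) + t * Complex.I)‖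
          ≤ (M / (R - N)) ^ p * |y + R - y| := by
        refine intervalIntegral.norm_integral_le_of_norm_le_const fun x hx => ?_
        rw [uIoc_of_le (by linarith)] at hx
        refine hbound R hRN _ (by simp; linarith [hx.1]) ?_
        left; simp; exact le_abs_self R
      rw [show |R - -R| = 2 * R by rw [abs_of_pos] <;> linarith] at i1
      rw [show |y + R - y| = R by rw [abs_of_pos] <;> linarith] at i2 i3
      have e : (∫ x in (-R)..R, G (x + y * Complex.I))
          = (∫ x in (-R)..R, G (x + ((y + R : ℝ) : ℂ) * Complex.I))
            - Complex.I • (∫ t in y..(y + R), G ((R : ℂ) + t * Complex.I))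
            + Complex.I • (∫ t in y..(y + R), G (((-R : ℝ) : ℂ) + t * Complex.I)) := by
        linear_combination h
      rw [e]
      refine (norm_add_le _ _).trans ?_
      refine (add_le_add_left (norm_sub_le _ _) _).trans ?_
      rw [norm_smul, norm_smul, Complex.norm_I, one_mul, one_mul]
      linarith
    · intro z hz
      have hzim : 0 < z.im := by
        have := hz.2
        simp only [mem_preimage, uIcc_of_le (by linarith : y ≤ y + R)] at this
        linarith [this.1]
      refine ((differentiableAt_cauchyTransform hf hzim).cpow_const ?_).differentiableWithinAt
      exact Or.inl (cauchyTransform_re_pos hf hf0 hne hzim)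
  have hlim : Tendsto (fun R : ℝ => 4 * (2 * M) ^ p * R ^ (-(p - 1))) atTop (𝓝 0) := by
    simpa using (tendsto_rpow_neg_atTop (by linarith : 0 < p - 1)).const_mul (4 * (2 * M) ^ p)
  refine squeeze_zero_norm' ?_ hlim
  filter_upwards [eventually_gt_atTop 1, eventually_gt_atTop (2 * N)]
    with R hR1 hR2
  refine (hrect R hR1 hR2).trans ?_
  have hR0 : 0 < R := by linarith
  have hRN : R / 2 ≤ R - N := by linarith
  have hRN' : 0 < R - N := by linarith
  calc 4 * R * (M / (R - N)) ^ p ≤ 4 * R * (M / (R / 2)) ^ p := by gcongr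
    _ = 4 * R * ((2 * M) ^ p * R ^ (-p)) := by
      rw [show M / (R / 2) = 2 * M * R⁻¹ by field_simp,
        Real.mul_rpow (by positivity) (by positivity), Real.inv_rpow hR0.le, Real.rpow_neg hR0.le]
    _ = 4 * (2 * M) ^ p * (R ^ (1 : ℝ) * R ^ (-p)) := by rw [Real.rpow_one]; ring
    _ = _ := by rw [← Real.rpow_add hR0]; ring_nf

theorem continuous_cauchyTransform {f : ℝ → ℝ} (hf : Integrable f) {y : ℝ} (hy : 0 < y) :
    Continuous fun x : ℝ => cauchyTransform f (x + y * Complex.I) := by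
  refine continuous_iff_continuousAt.2 fun x => ?_
  exact ContinuousAt.comp (f := fun x : ℝ => (x + y * Complex.I : ℂ))
    (differentiableAt_cauchyTransform hf (by simpa using hy)).continuousAt (by fun_prop)

theorem continuous_conjPoissonTransform {f : ℝ → ℝ} (hf : Integrable f) {y : ℝ} (hy : 0 < y) :
    Continuous (conjPoissonTransform y f) := by
  have := Complex.continuous_im.comp (continuous_cauchyTransform hf hy)
  exact this.congr fun x => (cauchyTransform_eq hf hy x).2

theorem lintegral_poissonKernel {y : ℝ} (hy : 0 < y) :
    ∫⁻ u : ℝ, ENNReal.ofReal (y / (u ^ 2 + y ^ 2)) = ENNReal.ofReal π := by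
  have e (u : ℝ) : y / (u ^ 2 + y ^ 2) = (1 / y) * (1 + (u / y) ^ 2)⁻¹ := by
    field_simp; ring
  have hintegrable : Integrable fun u : ℝ => (1 + (u / y) ^ 2)⁻¹ :=
    integrable_inv_one_add_sq.comp_div hy.ne'
  simp only [e]
  rw [← ofReal_integral_eq_lintegral_ofReal (hintegrable.const_mul _)
    (ae_of_all _ fun u => by positivity), integral_const_mul,
    Measure.integral_comp_div (fun v : ℝ => (1 + v ^ 2)⁻¹), integral_univ_inv_one_add_sq,
    abs_of_pos hy, smul_eq_mul]
  congr 1; field_simp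

theorem lintegral_poissonTransform_rpow_le {p : ℝ} (hp : 1 < p) {f : ℝ → ℝ} (hf : Integrable f)
    {y : ℝ} (hy : 0 < y) :
    ∫⁻ x, ‖poissonTransform y f x‖ₑ ^ p ≤ ENNReal.ofReal π ^ p * ∫⁻ t, ‖f t‖ₑ ^ p := by
  rw [← lintegral_poissonKernel hy]
  refine le_trans (lintegral_mono fun x => ?_) (lintegral_conv_rpow_le hp (by fun_prop)
    hf.aestronglyMeasurable.enorm)
  gcongr
  refine (enorm_integral_le_lintegral_enorm _).trans_eq ?_
  congr 1; ext t
  rw [enorm_mul, Real.enorm_of_nonneg (by positivity)]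

theorem lintegral_conjPoissonTransform_rpow_le {p : ℝ} (hp : 1 < p) {A B : ℝ} (hA : 0 ≤ A)
    (hB : 0 ≤ B) (hAB : ∀ z : ℂ, 0 < z.re → |z.im| ^ p ≤ A * z.re ^ p - B * (z ^ (p : ℂ)).re)
    {f : ℝ → ℝ} (hf : Integrable f) (hf0 : ∀ t, 0 ≤ f t) {N : ℝ} (hN0 : 0 ≤ N)
    (hN : ∀ t, N < |t| → f t = 0) {y : ℝ} (hy : 0 < y) :
    ∫⁻ x, ‖conjPoissonTransform y f x‖ₑ ^ p
      ≤ ENNReal.ofReal A * ∫⁻ x, ‖poissonTransform y f x‖ₑ ^ p := by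
  have hp0 : 0 < p := by linarith
  by_cases hne : f =ᵐ[volume] 0
  · have : ∀ x, conjPoissonTransform y f x = 0 := fun x => by
      refine integral_eq_zero_of_ae ?_
      filter_upwards [hne] with t ht
      simp [ht]
    simp [this, hp0]
  set F : ℝ → ℂ := fun x => cauchyTransform f (x + y * Complex.I) with hF
  have hFpos : ∀ x, 0 < (F x).re := fun x =>
    cauchyTransform_re_pos hf hf0 hne (by simpa using hy)
  have hFc : Continuous F := continuous_cauchyTransform hf hy
  have hre : ∀ x, poissonTransform y f x = (F x).re := fun x => (cauchyTransform_eq hf hy x).1.symm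
  have him : ∀ x, conjPoissonTransform y f x = (F x).im :=
    fun x => (cauchyTransform_eq hf hy x).2.symm
  have hFp : Continuous fun x => F x ^ (p : ℂ) :=
    hFc.cpow continuous_const fun x => Or.inl (hFpos x)
  have hQ : Continuous fun x => |(F x).im| ^ p := by
    refine Continuous.rpow_const (by fun_prop) fun x => Or.inr hp0.le
  have hP : Continuous fun x => (F x).re ^ p := by
    refine Continuous.rpow_const (by fun_prop) fun x => Or.inr hp0.le
  have hreal : ∀ R : ℝ, 0 ≤ R → ∫ x in (-R)..R, |(F x).im| ^ p
      ≤ A * (∫ x in (-R)..R, (F x).re ^ p) + B * ‖∫ x in (-R)..R, F x ^ (p : ℂ)‖ := by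
    intro R hR
    have h1 : ∫ x in (-R)..R, |(F x).im| ^ p
        ≤ ∫ x in (-R)..R, (A * (F x).re ^ p - B * (F x ^ (p : ℂ)).re) := by
      refine intervalIntegral.integral_mono_on (by linarith) (hQ.intervalIntegrable _ _)
        (Continuous.intervalIntegrable (by fun_prop) _ _) fun x _ => hAB _ (hFpos x)
    have hre' : ∫ x in (-R)..R, (F x ^ (p : ℂ)).re = (∫ x in (-R)..R, F x ^ (p : ℂ)).re := by
      have := Complex.reCLM.intervalIntegral_comp_comm (μ := volume) (hFp.intervalIntegrable (-R) R)
      simpa using this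
    rw [intervalIntegral.integral_sub ((hP.const_mul A).intervalIntegrable _ _)
      (Continuous.intervalIntegrable (by fun_prop) _ _), intervalIntegral.integral_const_mul,
      intervalIntegral.integral_const_mul, hre'] at h1
    have h2 := (neg_le_abs _).trans (Complex.abs_re_le_norm (∫ x in (-R)..R, F x ^ (p : ℂ)))
    nlinarith
  have hconv : ∀ (g : ℝ → ℝ), Continuous g → (∀ x, 0 ≤ g x) → ∀ R : ℝ, 0 ≤ R →
      ENNReal.ofReal (∫ x in (-R)..R, g x) = ∫⁻ x in Ioc (-R) R, ENNReal.ofReal (g x) := by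
    intro g hg hg0 R hR
    rw [intervalIntegral.integral_of_le (by linarith), ofReal_integral_eq_lintegral_ofReal
      ((hg.intervalIntegrable (-R) R).1) (ae_of_all _ hg0)]
  have hle : ∀ R : ℝ, 0 ≤ R → ∫⁻ x in Ioc (-R) R, ENNReal.ofReal (|(F x).im| ^ p)
      ≤ ENNReal.ofReal A * (∫⁻ x, ENNReal.ofReal ((F x).re ^ p))
        + ENNReal.ofReal (B * ‖∫ x in (-R)..R, F x ^ (p : ℂ)‖) := by
    intro R hR
    rw [← hconv _ hQ (fun x => by positivity) R hR]
    refine (ENNReal.ofReal_le_ofReal (hreal R hR)).trans ?_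
    refine ENNReal.ofReal_add_le.trans ?_
    gcongr
    rw [ENNReal.ofReal_mul hA, hconv _ hP (fun x => Real.rpow_nonneg (hFpos x).le _) R hR]
    gcongr
    exact Measure.restrict_le_self
  have e1 : ∀ x, ‖conjPoissonTransform y f x‖ₑ ^ p = ENNReal.ofReal (|(F x).im| ^ p) := fun x => by
    rw [him, ← ofReal_norm, ENNReal.ofReal_rpow_of_nonneg (norm_nonneg _) hp0.le,
      Real.norm_eq_abs]
  have e2 : ∀ x, ‖poissonTransform y f x‖ₑ ^ p = ENNReal.ofReal ((F x).re ^ p) := fun x => by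
    rw [hre, Real.enorm_of_nonneg (hFpos x).le, ENNReal.ofReal_rpow_of_nonneg (hFpos x).le hp0.le]
  simp only [e1, e2]
  have t1 : Tendsto (fun R : ℝ => ∫⁻ x in Ioc (-R) R, ENNReal.ofReal (|(F x).im| ^ p)) atTop
      (𝓝 (∫⁻ x, ENNReal.ofReal (|(F x).im| ^ p))) :=
    (aecover_Ioc tendsto_neg_atTop_atBot tendsto_id).lintegral_tendsto_of_countably_generated
      (by fun_prop)
  have t2 : Tendsto (fun R : ℝ => ENNReal.ofReal A * (∫⁻ x, ENNReal.ofReal ((F x).re ^ p))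
        + ENNReal.ofReal (B * ‖∫ x in (-R)..R, F x ^ (p : ℂ)‖)) atTop
      (𝓝 (ENNReal.ofReal A * (∫⁻ x, ENNReal.ofReal ((F x).re ^ p)) + 0)) := by
    refine Tendsto.add tendsto_const_nhds ?_
    have := (tendsto_integral_cauchyTransform_cpow hf hf0 hne hN0 hN hp hy).norm.const_mul B
    simpa using ENNReal.tendsto_ofReal this
  rw [add_zero] at t2
  refine le_of_tendsto_of_tendsto t1 t2 ?_
  filter_upwards [eventually_ge_atTop 0] with R hR using hle R hR

theorem conjPoissonTransform_sub {f g : ℝ → ℝ} (hf : Integrable f) (hg : Integrable g) {y : ℝ}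
    (hy : 0 < y) : conjPoissonTransform y (f - g)
      = conjPoissonTransform y f - conjPoissonTransform y g := by
  ext x
  simp only [conjPoissonTransform, Pi.sub_apply, mul_sub]
  exact integral_sub (integrable_conjPoissonTransform hf hy x)
    (integrable_conjPoissonTransform hg hy x)

theorem exists_eLpNorm_conjPoissonTransform_le_of_le_two {p : ℝ} (hp : 1 < p) (hp2 : p ≤ 2) :
    ∃ C : ℝ≥0∞, C ≠ ∞ ∧ ∀ y : ℝ, 0 < y → ∀ f : ℝ → ℝ, Integrable f →
      (∃ N : ℝ, ∀ t, N < |t| → f t = 0) →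
      eLpNorm (conjPoissonTransform y f) (ENNReal.ofReal p) volume
        ≤ C * eLpNorm f (ENNReal.ofReal p) volume := by
  have hp0 : 0 < p := by linarith
  obtain ⟨A, B, hA, hB, hAB⟩ := exists_abs_im_rpow_le hp hp2
  set C := (ENNReal.ofReal A * ENNReal.ofReal π ^ p) ^ (1 / p) with hC
  have hCtop : C ≠ ∞ := by
    simp only [hC]; finiteness
  have hp0' : ENNReal.ofReal p ≠ 0 := by simpa using hp0
  have hpos : ∀ y : ℝ, 0 < y → ∀ f : ℝ → ℝ, Integrable f → (∀ t, 0 ≤ f t) →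
      (∃ N : ℝ, ∀ t, N < |t| → f t = 0) →
      eLpNorm (conjPoissonTransform y f) (ENNReal.ofReal p) volume
        ≤ C * eLpNorm f (ENNReal.ofReal p) volume := by
    rintro y hy f hf hf0 ⟨N, hN⟩
    simp only [eLpNorm_eq_lintegral_rpow_enorm_toReal hp0' ENNReal.ofReal_ne_top,
      ENNReal.toReal_ofReal hp0.le]
    rw [hC, ← ENNReal.mul_rpow_of_nonneg _ _ (by positivity)]
    gcongr
    refine (lintegral_conjPoissonTransform_rpow_le hp hA hB hAB hf hf0 (abs_nonneg N)
      (fun t ht => hN t ((le_abs_self N).trans_lt ht)) hy).trans ?_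
    rw [mul_assoc]
    gcongr
    exact lintegral_poissonTransform_rpow_le hp hf hy
  refine ⟨2 * C, by finiteness, fun y hy f hf ⟨N, hN⟩ => ?_⟩
  have hf1 : Integrable fun t => max (f t) 0 := hf.pos_part
  have hf2 : Integrable fun t => max (-f t) 0 := hf.neg_part
  have hdecomp : f = (fun t => max (f t) 0) - fun t => max (-f t) 0 := by
    ext t
    simp only [Pi.sub_apply]
    rcases le_total 0 (f t) with h | h
    · rw [max_eq_left h, max_eq_right (by linarith), sub_zero]
    · rw [max_eq_right h, max_eq_left (by linarith)]; ring
  have b1 := hpos y hy _ hf1 (fun t => le_max_right _ _) ⟨N, fun t ht => by simp [hN t ht]⟩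
  have b2 := hpos y hy _ hf2 (fun t => le_max_right _ _) ⟨N, fun t ht => by simp [hN t ht]⟩
  have n1 : eLpNorm (fun t => max (f t) 0) (ENNReal.ofReal p) volume
      ≤ eLpNorm f (ENNReal.ofReal p) volume :=
    eLpNorm_mono fun t => by
      rw [Real.norm_of_nonneg (le_max_right _ _)]
      exact max_le (le_abs_self _) (abs_nonneg _)
  have n2 : eLpNorm (fun t => max (-f t) 0) (ENNReal.ofReal p) volume
      ≤ eLpNorm f (ENNReal.ofReal p) volume :=
    eLpNorm_mono fun t => by
      rw [Real.norm_of_nonneg (le_max_right _ _)]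
      exact max_le (neg_le_abs _) (abs_nonneg _)
  conv_lhs => rw [hdecomp]
  rw [conjPoissonTransform_sub hf1 hf2 hy]
  calc _ ≤ _ := eLpNorm_sub_le (continuous_conjPoissonTransform hf1 hy).aestronglyMeasurable
        (continuous_conjPoissonTransform hf2 hy).aestronglyMeasurable
        (by rw [ENNReal.one_le_ofReal]; exact hp.le)
    _ ≤ C * eLpNorm f (ENNReal.ofReal p) volume + C * eLpNorm f (ENNReal.ofReal p) volume := by
      gcongr
      · exact b1.trans (by gcongr)
      · exact b2.trans (by gcongr)
    _ = _ := by ring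

theorem integral_conjPoissonTransform_mul {f g : ℝ → ℝ} (hf : Integrable f) (hg : Integrable g)
    {y : ℝ} (hy : 0 < y) :
    ∫ x, conjPoissonTransform y f x * g x = -∫ t, f t * conjPoissonTransform y g t := by
  have hintegrable : Integrable (Function.uncurry fun x t : ℝ =>
      (x - t) / ((x - t) ^ 2 + y ^ 2) * (g x * f t)) (volume.prod volume) :=
    (hg.mul_prod hf).bdd_mul (f := fun z : ℝ × ℝ => (z.1 - z.2) / ((z.1 - z.2) ^ 2 + y ^ 2))
      (c := 1 / y) (Measurable.aestronglyMeasurable (by fun_prop))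
      (ae_of_all _ fun z => norm_conjKernel_le hy _)
  calc ∫ x, conjPoissonTransform y f x * g x
      = ∫ x, ∫ t, (x - t) / ((x - t) ^ 2 + y ^ 2) * (g x * f t) := by
        congr 1; ext x
        rw [conjPoissonTransform, ← integral_mul_const]
        congr 1; ext t; ring
    _ = ∫ t, ∫ x, (x - t) / ((x - t) ^ 2 + y ^ 2) * (g x * f t) := integral_integral_swap hintegrable
    _ = ∫ t, -(f t * conjPoissonTransform y g t) := by
        congr 1; ext t
        rw [conjPoissonTransform, ← integral_const_mul, ← integral_neg]
        congr 1; ext x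
        rw [show (t - x) ^ 2 = (x - t) ^ 2 by ring]
        ring
    _ = _ := integral_neg _

theorem norm_conjPoissonTransform_le {f : ℝ → ℝ} (hf : Integrable f) {y : ℝ} (hy : 0 < y)
    (x : ℝ) : ‖conjPoissonTransform y f x‖ ≤ 1 / y * ∫ t, ‖f t‖ := by
  rw [← integral_const_mul]
  refine norm_integral_le_of_norm_le (hf.norm.const_mul _) (ae_of_all _ fun t => ?_)
  rw [norm_mul]
  gcongr
  exact norm_conjKernel_le hy _

theorem exists_eLpNorm_conjPoissonTransform_le_of_conj {p q : ℝ} (hpq : p.HolderConjugate q)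
    (hq : ∃ C : ℝ≥0∞, C ≠ ∞ ∧ ∀ y : ℝ, 0 < y → ∀ f : ℝ → ℝ, Integrable f →
      (∃ N : ℝ, ∀ t, N < |t| → f t = 0) →
      eLpNorm (conjPoissonTransform y f) (ENNReal.ofReal q) volume
        ≤ C * eLpNorm f (ENNReal.ofReal q) volume) :
    ∃ C : ℝ≥0∞, C ≠ ∞ ∧ ∀ y : ℝ, 0 < y → ∀ f : ℝ → ℝ, Integrable f →
      (∃ N : ℝ, ∀ t, N < |t| → f t = 0) →
      eLpNorm (conjPoissonTransform y f) (ENNReal.ofReal p) volume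
        ≤ C * eLpNorm f (ENNReal.ofReal p) volume := by
  obtain ⟨C, hC, hbd⟩ := hq
  refine ⟨C, hC, fun y hy f hf hfN => ?_⟩
  have hp0 := hpq.pos
  have hq0 := hpq.symm.pos
  have hp1 := hpq.lt
  have hq1 := hpq.symm.lt
  have hp0' : ENNReal.ofReal p ≠ 0 := by simpa using hp0
  have hq0' : ENNReal.ofReal q ≠ 0 := by simpa using hq0
  set h := conjPoissonTransform y f with hh
  have hcont : Continuous h := continuous_conjPoissonTransform hf hy
  have hpq' : (p - 1) * q = p := hpq.sub_one_mul_conj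
  set K := C * eLpNorm f (ENNReal.ofReal p) volume with hK
  have hloc : ∀ n : ℕ, (∫⁻ x in Icc (-n : ℝ) n, ‖h x‖ₑ ^ p) ≤ K ^ p := by
    intro n
    set I := Icc (-n : ℝ) n
    have hI : MeasurableSet I := measurableSet_Icc
    set φ : ℝ → ℝ := fun x => (h x).sign * |h x| ^ (p - 1) with hφ
    have hφm : Measurable φ := by
      have : Measurable h := hcont.measurable
      simp only [hφ]
      refine Measurable.mul ?_ (by fun_prop)
      have hs : Measurable Real.sign := by
        unfold Real.sign
        exact Measurable.ite measurableSet_Iio measurable_const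
          (Measurable.ite measurableSet_Ioi measurable_const measurable_const)
      exact hs.comp this
    have hφle : ∀ x, |φ x| ≤ |h x| ^ (p - 1) := fun x => by
      simp only [hφ, abs_mul, abs_of_nonneg (Real.rpow_nonneg (abs_nonneg (h x)) _)]
      have : |(h x).sign| ≤ 1 := by
        rcases Real.sign_apply_eq (h x) with h | h | h <;> simp [h]
      nlinarith [Real.rpow_nonneg (abs_nonneg (h x)) (p - 1)]
    have hφmul : ∀ x, h x * φ x = |h x| ^ p := fun x => by
      simp only [hφ]
      have e : h x * (h x).sign = |h x| := by
        rcases lt_trichotomy (h x) 0 with hx | hx | hx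
        · rw [Real.sign_of_neg hx, abs_of_neg hx, mul_neg_one]
        · simp [hx]
        · rw [Real.sign_of_pos hx, abs_of_pos hx, mul_one]
      rw [← mul_assoc, e]
      nth_rewrite 1 [← Real.rpow_one |h x|]
      rw [← Real.rpow_add_of_nonneg (abs_nonneg _) zero_le_one (by linarith)]
      simp
    set g := I.indicator φ with hg
    have hgint : Integrable g := by
      rw [hg, integrable_indicator_iff hI]
      refine Measure.integrableOn_of_bounded (M := (1 / y * ∫ t, ‖f t‖) ^ (p - 1))
        (by simp [I]) hφm.aestronglyMeasurable (ae_of_all _ fun x => ?_)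
      refine (hφle x).trans ?_
      have := norm_conjPoissonTransform_le hf hy x
      rw [Real.norm_eq_abs] at this
      have : 0 ≤ p - 1 := by linarith
      gcongr
    have hgN : ∃ N : ℝ, ∀ t, N < |t| → g t = 0 := ⟨n, fun t ht => by
      refine indicator_of_notMem (fun hm => ?_) _
      exact absurd (abs_le.2 hm) (not_le.2 ht)⟩
    set X := ∫⁻ x in I, ‖h x‖ₑ ^ p with hX
    have hXreal : X = ENNReal.ofReal (∫ x in I, |h x| ^ p) := by
      rw [ofReal_integral_eq_lintegral_ofReal]
      · rw [hX]
        congr 1; ext x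
        rw [← ofReal_norm, ENNReal.ofReal_rpow_of_nonneg (norm_nonneg _) hp0.le,
          Real.norm_eq_abs]
      · exact (Continuous.rpow_const (by fun_prop)
          fun x => Or.inr hp0.le).continuousOn.integrableOn_Icc
      · exact ae_of_all _ fun x => by positivity
    have hXtop : X ≠ ∞ := by rw [hXreal]; exact ENNReal.ofReal_ne_top
    have hXeq : X = ‖∫ x, h x * g x‖ₑ := by
      have e : ∀ x, h x * g x = I.indicator (fun x => |h x| ^ p) x := fun x => by
        by_cases hx : x ∈ I <;> simp [hg, hx, hφmul]
      simp only [e]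
      rw [integral_indicator hI, Real.enorm_of_nonneg (integral_nonneg fun x => by positivity),
        hXreal]
    have hgnorm : eLpNorm g (ENNReal.ofReal q) volume ≤ X ^ (1 / q) := by
      rw [eLpNorm_eq_lintegral_rpow_enorm_toReal hq0' ENNReal.ofReal_ne_top,
        ENNReal.toReal_ofReal hq0.le, hX, ← lintegral_indicator hI]
      gcongr with x
      by_cases hx : x ∈ I
      · simp only [hg, hx, indicator_of_mem]
        calc ‖φ x‖ₑ ^ q ≤ (‖h x‖ₑ ^ (p - 1)) ^ q := by
              gcongr
              rw [← ofReal_norm, ← ofReal_norm, ENNReal.ofReal_rpow_of_nonneg (norm_nonneg _)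
                (by linarith)]
              exact ENNReal.ofReal_le_ofReal (hφle x)
          _ = _ := by rw [← ENNReal.rpow_mul, hpq']
      · simp [hg, hx, hq0]
    have hXle : X ≤ K * X ^ (1 / q) := by
      rw [integral_conjPoissonTransform_mul hf hgint hy, enorm_neg] at hXeq
      calc X = ‖∫ t, f t * conjPoissonTransform y g t‖ₑ := hXeq
        _ ≤ ∫⁻ t, ‖f t * conjPoissonTransform y g t‖ₑ := enorm_integral_le_lintegral_enorm _
        _ = ∫⁻ t, ‖f t‖ₑ * ‖conjPoissonTransform y g t‖ₑ := by simp only [enorm_mul]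
        _ ≤ eLpNorm f (ENNReal.ofReal p) volume *
            eLpNorm (conjPoissonTransform y g) (ENNReal.ofReal q) volume := by
          rw [eLpNorm_eq_lintegral_rpow_enorm_toReal hq0' ENNReal.ofReal_ne_top,
            ENNReal.toReal_ofReal hq0.le,
            eLpNorm_eq_lintegral_rpow_enorm_toReal hp0' ENNReal.ofReal_ne_top,
            ENNReal.toReal_ofReal hp0.le]
          exact ENNReal.lintegral_mul_le_Lp_mul_Lq volume hpq hf.aestronglyMeasurable.enorm
            (continuous_conjPoissonTransform hgint hy).aestronglyMeasurable.enorm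
        _ ≤ eLpNorm f (ENNReal.ofReal p) volume * (C * X ^ (1 / q)) := by
          gcongr
          exact (hbd y hy g hgint hgN).trans (by gcongr)
        _ = _ := by rw [hK]; ring
    rcases eq_or_ne X 0 with h0 | h0
    · rw [h0]; exact zero_le
    have hXp : X = X ^ (1 / p) * X ^ (1 / q) := by
      rw [← ENNReal.rpow_add _ _ h0 hXtop, hpq.one_div_add_one_div]; simp
    have hXq0 : X ^ (1 / q) ≠ 0 := by
      simp [ENNReal.rpow_eq_zero_iff, h0, hXtop]
    have hXqt : X ^ (1 / q) ≠ ∞ := ENNReal.rpow_ne_top_of_nonneg (by positivity) hXtop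
    have : X ^ (1 / p) ≤ K := by
      refine (ENNReal.mul_le_mul_iff_left hXq0 hXqt).1 ?_
      rwa [← hXp]
    calc X = (X ^ (1 / p)) ^ p := by
          rw [← ENNReal.rpow_mul, one_div_mul_cancel hp0.ne', ENNReal.rpow_one]
      _ ≤ K ^ p := by gcongr
  have hfull : ∫⁻ x, ‖h x‖ₑ ^ p ≤ K ^ p := by
    have t1 : Tendsto (fun n : ℕ => ∫⁻ x in Icc (-n : ℝ) n, ‖h x‖ₑ ^ p) atTop
        (𝓝 (∫⁻ x, ‖h x‖ₑ ^ p)) :=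
      (aecover_Icc (tendsto_neg_atTop_atBot.comp tendsto_natCast_atTop_atTop)
        tendsto_natCast_atTop_atTop).lintegral_tendsto_of_countably_generated
        (by fun_prop)
    exact le_of_tendsto' t1 hloc
  rw [eLpNorm_eq_lintegral_rpow_enorm_toReal hp0' ENNReal.ofReal_ne_top,
    ENNReal.toReal_ofReal hp0.le]
  calc _ ≤ (K ^ p) ^ (1 / p) := by gcongr
    _ = K := by rw [← ENNReal.rpow_mul, mul_one_div_cancel hp0.ne', ENNReal.rpow_one]

/-- The conjugate Poisson transforms are bounded on `L^p`, uniformly in `y`. -/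
theorem exists_eLpNorm_conjPoissonTransform_le {p : ℝ} (hp : 1 < p) :
    ∃ C : ℝ≥0∞, C ≠ ∞ ∧ ∀ y : ℝ, 0 < y → ∀ f : ℝ → ℝ, Integrable f →
      (∃ N : ℝ, ∀ t, N < |t| → f t = 0) →
      eLpNorm (conjPoissonTransform y f) (ENNReal.ofReal p) volume
        ≤ C * eLpNorm f (ENNReal.ofReal p) volume := by
  rcases le_total p 2 with h | h
  · exact exists_eLpNorm_conjPoissonTransform_le_of_le_two hp h
  · have hpq := Real.HolderConjugate.conjExponent hp
    refine exists_eLpNorm_conjPoissonTransform_le_of_conj hpq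
      (exists_eLpNorm_conjPoissonTransform_le_of_le_two hpq.symm.lt ?_)
    rw [Real.conjExponent, div_le_iff₀ (by linarith)]
    linarith

/-- The odd kernel `(k_y - k_{y+1}) / 2`, with `k_y(u) = u / (u² + y²)`. -/
noncomputable def oddKernel (y u : ℝ) : ℝ :=
  (u / (u ^ 2 + y ^ 2) - u / (u ^ 2 + (y + 1) ^ 2)) / 2

theorem exists_eLpNorm_conjPoissonTransform_complex_le {p : ℝ} (hp : 1 < p) :
    ∃ C : ℝ≥0∞, C ≠ ∞ ∧ ∀ y : ℝ, 0 < y → ∀ g : ℝ → ℂ, Integrable g →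
      (∃ N : ℝ, ∀ t, N < |t| → g t = 0) →
      AEStronglyMeasurable
        (fun x => ∫ t, (((x - t) / ((x - t) ^ 2 + y ^ 2) : ℝ) : ℂ) * g t) volume ∧
      eLpNorm (fun x => ∫ t, (((x - t) / ((x - t) ^ 2 + y ^ 2) : ℝ) : ℂ) * g t)
        (ENNReal.ofReal p) volume ≤ C * eLpNorm g (ENNReal.ofReal p) volume := by
  obtain ⟨C, hC, hbd⟩ := exists_eLpNorm_conjPoissonTransform_le hp
  refine ⟨2 * C, by finiteness, fun y hy g hg ⟨N, hN⟩ => ?_⟩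
  have hre : Integrable fun t => (g t).re := hg.re
  have him : Integrable fun t => (g t).im := hg.im
  have b1 := hbd y hy _ hre ⟨N, fun t ht => by simp [hN t ht]⟩
  have b2 := hbd y hy _ him ⟨N, fun t ht => by simp [hN t ht]⟩
  have m1 := (continuous_conjPoissonTransform hre hy)
  have m2 := (continuous_conjPoissonTransform him hy)
  have e : (fun x => ∫ t, (((x - t) / ((x - t) ^ 2 + y ^ 2) : ℝ) : ℂ) * g t)
      = (fun x => ((conjPoissonTransform y (fun t => (g t).re) x : ℝ) : ℂ))
        + fun x => Complex.I * ((conjPoissonTransform y (fun t => (g t).im) x : ℝ) : ℂ) := by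
    ext x
    simp only [Pi.add_apply, conjPoissonTransform]
    rw [← integral_complex_ofReal, ← integral_complex_ofReal, ← integral_const_mul,
      ← integral_add]
    · congr 1; ext t
      conv_lhs => rw [← Complex.re_add_im (g t)]
      push_cast; ring
    · exact (integrable_conjPoissonTransform hre hy x).ofReal
    · exact (integrable_conjPoissonTransform him hy x).ofReal.const_mul _
  have c1 : Continuous fun x => ((conjPoissonTransform y (fun t => (g t).re) x : ℝ) : ℂ) := by
    fun_prop
  have c2 : Continuous fun x =>
      Complex.I * ((conjPoissonTransform y (fun t => (g t).im) x : ℝ) : ℂ) := by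
    fun_prop
  rw [e]
  refine ⟨(c1.add c2).aestronglyMeasurable, ?_⟩
  refine (eLpNorm_add_le c1.aestronglyMeasurable c2.aestronglyMeasurable
    (by rw [ENNReal.one_le_ofReal]; exact hp.le)).trans ?_
  have n1 : eLpNorm (fun t => (g t).re) (ENNReal.ofReal p) volume
      ≤ eLpNorm g (ENNReal.ofReal p) volume :=
    eLpNorm_mono fun t => Complex.abs_re_le_norm _
  have n2 : eLpNorm (fun t => (g t).im) (ENNReal.ofReal p) volume
      ≤ eLpNorm g (ENNReal.ofReal p) volume :=
    eLpNorm_mono fun t => Complex.abs_im_le_norm _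
  have e1 : eLpNorm (fun x => ((conjPoissonTransform y (fun t => (g t).re) x : ℝ) : ℂ))
      (ENNReal.ofReal p) volume
      ≤ eLpNorm (conjPoissonTransform y (fun t => (g t).re)) (ENNReal.ofReal p) volume :=
    eLpNorm_mono fun x => by simp
  have e2 : eLpNorm (fun x => Complex.I *
      ((conjPoissonTransform y (fun t => (g t).im) x : ℝ) : ℂ)) (ENNReal.ofReal p) volume
      ≤ eLpNorm (conjPoissonTransform y (fun t => (g t).im)) (ENNReal.ofReal p) volume :=
    eLpNorm_mono fun x => by simp
  calc _ ≤ C * eLpNorm g (ENNReal.ofReal p) volume + C * eLpNorm g (ENNReal.ofReal p) volume :=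
        add_le_add (e1.trans (b1.trans (by gcongr))) (e2.trans (b2.trans (by gcongr)))
    _ = _ := by ring

theorem integral_oddKernel_eq {y : ℝ} (hy : 0 < y) {g : ℝ → ℂ} (hg : Integrable g) (x : ℝ) :
    ∫ t, (((x - t) / ((x - t) ^ 2 + y ^ 2) : ℝ) : ℂ) * g t
      = ∫ u in Ioi (0 : ℝ), ((u / (u ^ 2 + y ^ 2) : ℝ) : ℂ) * (g (x - u) - g (x + u)) := by
  have hintegrable : Integrable fun u : ℝ => ((u / (u ^ 2 + y ^ 2) : ℝ) : ℂ) * g (x - u) := by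
    refine (hg.comp_sub_left x).bdd_mul (c := 1 / y)
      (Measurable.aestronglyMeasurable (by fun_prop)) (ae_of_all _ fun u => ?_)
    rw [Complex.norm_real]
    exact norm_conjKernel_le hy u
  have h1 : ∫ t, (((x - t) / ((x - t) ^ 2 + y ^ 2) : ℝ) : ℂ) * g t
      = ∫ u, ((u / (u ^ 2 + y ^ 2) : ℝ) : ℂ) * g (x - u) := by
    rw [← integral_sub_left_eq_self (fun u => ((u / (u ^ 2 + y ^ 2) : ℝ) : ℂ) * g (x - u))
      volume x]
    simp
  have h2 := intervalIntegral.integral_Iic_add_Ioi (b := 0) hintegrable.integrableOn hintegrable.integrableOn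
  have h3 := integral_comp_neg_Ioi (0 : ℝ) (fun u => ((u / (u ^ 2 + y ^ 2) : ℝ) : ℂ) * g (x - u))
  rw [neg_zero] at h3
  have hintegrable' : Integrable fun u : ℝ => ((-u / ((-u) ^ 2 + y ^ 2) : ℝ) : ℂ) * g (x - -u) :=
    hintegrable.comp_neg
  rw [h1, ← h2, ← h3, ← integral_add hintegrable'.integrableOn hintegrable.integrableOn]
  congr 1; ext u
  rw [neg_sq, sub_neg_eq_add, neg_div]
  push_cast; ring

theorem exists_eLpNorm_oddKernel_le {p : ℝ} (hp : 1 < p) :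
    ∃ C : ℝ≥0∞, C ≠ ∞ ∧ ∀ y : ℝ, 0 < y → ∀ g : ℝ → ℂ, Integrable g →
      (∃ N : ℝ, ∀ t, N < |t| → g t = 0) →
      AEStronglyMeasurable (fun x => ∫ u in Ioi (0 : ℝ),
        (oddKernel y u : ℂ) * (g (x - u) - g (x + u))) volume ∧
      eLpNorm (fun x => ∫ u in Ioi (0 : ℝ), (oddKernel y u : ℂ) * (g (x - u) - g (x + u)))
        (ENNReal.ofReal p) volume ≤ C * eLpNorm g (ENNReal.ofReal p) volume := by
  obtain ⟨C, hC, hbd⟩ := exists_eLpNorm_conjPoissonTransform_complex_le hp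
  refine ⟨2 * C, by finiteness, fun y hy g hg hN => ?_⟩
  obtain ⟨m1, b1⟩ := hbd y hy g hg hN
  obtain ⟨m2, b2⟩ := hbd (y + 1) (by linarith) g hg hN
  have hk (y : ℝ) (hy : 0 < y) (x : ℝ) : Integrable fun u : ℝ =>
      ((u / (u ^ 2 + y ^ 2) : ℝ) : ℂ) * (g (x - u) - g (x + u)) := by
    refine ((hg.comp_sub_left x).sub (hg.comp_add_left x)).bdd_mul (c := 1 / y)
      (Measurable.aestronglyMeasurable (by fun_prop)) (ae_of_all _ fun u => ?_)
    rw [Complex.norm_real]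
    exact norm_conjKernel_le hy u
  have e : (fun x => ∫ u in Ioi (0 : ℝ), (oddKernel y u : ℂ) * (g (x - u) - g (x + u)))
      = (1 / 2 : ℂ) • ((fun x => ∫ t, (((x - t) / ((x - t) ^ 2 + y ^ 2) : ℝ) : ℂ) * g t)
        - fun x => ∫ t, (((x - t) / ((x - t) ^ 2 + (y + 1) ^ 2) : ℝ) : ℂ) * g t) := by
    ext x
    simp only [Pi.smul_apply, Pi.sub_apply, smul_eq_mul]
    rw [integral_oddKernel_eq hy hg, integral_oddKernel_eq (by linarith) hg,
      ← integral_sub (hk y hy x).integrableOn (hk (y + 1) (by linarith) x).integrableOn,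
      ← integral_const_mul]
    congr 1; ext u
    simp only [oddKernel]
    push_cast; ring
  rw [e]
  refine ⟨(m1.sub m2).const_smul _, ?_⟩
  refine (eLpNorm_const_smul_le).trans ?_
  calc _ ≤ 1 * (C * eLpNorm g (ENNReal.ofReal p) volume
            + C * eLpNorm g (ENNReal.ofReal p) volume) := by
        gcongr
        · rw [← ofReal_norm]
          simp
        · exact (eLpNorm_sub_le m1 m2 (by rw [ENNReal.one_le_ofReal]; exact hp.le)).trans
            (add_le_add b1 b2)
    _ = _ := by ring

theorem abs_oddKernel_le {y u : ℝ} (hy : 0 ≤ y) (hu : 0 < u) : |oddKernel y u| ≤ 1 / u := by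
  have h1 : u / (u ^ 2 + y ^ 2) ≤ 1 / u := by
    rw [div_le_div_iff₀ (by positivity) hu]; nlinarith [sq_nonneg y]
  have h2 : u / (u ^ 2 + (y + 1) ^ 2) ≤ u / (u ^ 2 + y ^ 2) := by
    gcongr; linarith
  have h3 : 0 ≤ u / (u ^ 2 + (y + 1) ^ 2) := by positivity
  have h4 : 0 < 1 / u := by positivity
  rw [oddKernel, abs_le]
  constructor <;> linarith

theorem measurable_oddKernel (y : ℝ) : Measurable (oddKernel y) := by
  unfold oddKernel; fun_prop

/-- Domination for the odd kernels against a function with bounded support which is Lipschitz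
around `x`. -/
theorem exists_oddKernel_dominator {g : ℝ → ℂ} {N : ℝ} (hN : ∀ t, N < |t| → g t = 0) {x L : ℝ}
    (hL : ∀ u, 0 < u → u ≤ |x| + |N| → ‖g (x - u) - g (x + u)‖ ≤ L * u) :
    ∃ b : ℝ → ℝ, Integrable b (volume.restrict (Ioi 0)) ∧ ∀ y : ℝ, 0 ≤ y → ∀ u : ℝ, 0 < u →
      ‖(oddKernel y u : ℂ) * (g (x - u) - g (x + u))‖ ≤ b u := by
  refine ⟨(Ioc 0 (|x| + |N|)).indicator fun _ => L, ?_, fun y hy u hu => ?_⟩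
  · exact ((integrable_indicator_iff measurableSet_Ioc).2 (by simp)).integrableOn
  · by_cases hU : u ≤ |x| + |N|
    · rw [indicator_of_mem (show u ∈ Ioc 0 (|x| + |N|) from ⟨hu, hU⟩), norm_mul, Complex.norm_real,
        Real.norm_eq_abs]
      calc _ ≤ 1 / u * (L * u) := by
            gcongr
            · exact abs_oddKernel_le hy hu
            · exact hL u hu hU
        _ = L := by field_simp
    · push Not at hU
      have hNN := le_abs_self N
      have z1 : g (x - u) = 0 := hN _ (by
        have := abs_sub_abs_le_abs_sub u x
        rw [abs_of_pos hu, abs_sub_comm] at this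
        linarith)
      have z2 : g (x + u) = 0 := hN _ (by
        have := abs_sub_abs_le_abs_sub u (-x)
        rw [abs_of_pos hu, abs_neg, sub_neg_eq_add, add_comm u x] at this
        linarith)
      rw [z1, z2, indicator_of_notMem (by simp [hU])]
      simp

theorem exists_eLpNorm_oddKernel_zero_le {p : ℝ} (hp : 1 < p) :
    ∃ C : ℝ≥0∞, C ≠ ∞ ∧ ∀ g : ℝ → ℂ, Continuous g → ∀ N : ℝ, (∀ t, N < |t| → g t = 0) →
      (∀ x, ∃ L : ℝ, ∀ u, 0 < u → u ≤ |x| + |N| → ‖g (x - u) - g (x + u)‖ ≤ L * u) →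
      AEStronglyMeasurable (fun x => ∫ u in Ioi (0 : ℝ),
        (oddKernel 0 u : ℂ) * (g (x - u) - g (x + u))) volume ∧
      eLpNorm (fun x => ∫ u in Ioi (0 : ℝ), (oddKernel 0 u : ℂ) * (g (x - u) - g (x + u)))
        (ENNReal.ofReal p) volume ≤ C * eLpNorm g (ENNReal.ofReal p) volume := by
  obtain ⟨C, hC, hbd⟩ := exists_eLpNorm_oddKernel_le hp
  refine ⟨C, hC, fun g hg N hN hL => ?_⟩
  have hcs : HasCompactSupport g :=
    HasCompactSupport.intro (isCompact_Icc (a := -N) (b := N)) fun t ht => hN t (by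
      by_contra hcon
      exact ht (abs_le.1 (not_lt.1 hcon)))
  have hgi : Integrable g := hg.integrable_of_hasCompactSupport hcs
  set y : ℕ → ℝ := fun n => 1 / ((n : ℝ) + 1) with hy
  have hypos : ∀ n, 0 < y n := fun n => by positivity
  have hylim : Tendsto y atTop (𝓝 0) := tendsto_one_div_add_atTop_nhds_zero_nat
  have hlim : ∀ x, Tendsto (fun n => ∫ u in Ioi (0 : ℝ),
      (oddKernel (y n) u : ℂ) * (g (x - u) - g (x + u))) atTop
      (𝓝 (∫ u in Ioi (0 : ℝ), (oddKernel 0 u : ℂ) * (g (x - u) - g (x + u)))) := by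
    intro x
    obtain ⟨L, hLx⟩ := hL x
    obtain ⟨b, hb, hle⟩ := exists_oddKernel_dominator hN hLx
    refine tendsto_integral_of_dominated_convergence b (fun n => ?_) hb (fun n => ?_) ?_
    · refine Measurable.aestronglyMeasurable ?_
      have := measurable_oddKernel (y n)
      have := hg.measurable
      fun_prop
    · filter_upwards [ae_restrict_mem measurableSet_Ioi] with u hu
      exact hle _ (hypos n).le u hu
    · filter_upwards [ae_restrict_mem measurableSet_Ioi] with u hu
      have hu : 0 < u := hu
      refine Tendsto.mul_const _ ?_
      refine (Complex.continuous_ofReal.tendsto _).comp ?_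
      have : ContinuousAt (fun y => oddKernel y u) 0 := by
        unfold oddKernel
        have : u ^ 2 + 0 ^ 2 ≠ 0 := by positivity
        have : u ^ 2 + (0 + 1) ^ 2 ≠ 0 := by positivity
        fun_prop (disch := assumption)
      exact this.tendsto.comp hylim
  refine ⟨aestronglyMeasurable_of_tendsto_ae atTop (fun n => (hbd (y n) (hypos n) g hgi ⟨N, hN⟩).1)
    (ae_of_all _ hlim), ?_⟩
  refine (Lp.eLpNorm_lim_le_liminf_eLpNorm
    (fun n => (hbd (y n) (hypos n) g hgi ⟨N, hN⟩).1) _ (ae_of_all _ hlim)).trans ?_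
  refine liminf_le_of_frequently_le' (Frequently.of_forall fun n => ?_)
  exact (hbd (y n) (hypos n) g hgi ⟨N, hN⟩).2

theorem abs_exp_sub_one_le_mul_exp (x : ℝ) : |Real.exp x - 1| ≤ |x| * Real.exp |x| := by
  have h1 := Real.add_one_le_exp x
  have h2 := Real.add_one_le_exp (-x)
  rw [abs_le]
  rcases le_total 0 x with h | h
  · rw [abs_of_nonneg h]
    have h3 : Real.exp x * Real.exp (-x) = 1 := by rw [← Real.exp_add]; simp
    constructor <;> nlinarith [Real.exp_pos x]
  · rw [abs_of_nonpos h]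
    have : 1 ≤ Real.exp (-x) := Real.one_le_exp (by linarith)
    have : Real.exp x ≤ 1 := Real.exp_le_one_iff.2 h
    constructor <;> nlinarith

theorem abs_exp_div_sub_le (a : ℝ) {u : ℝ} (hu : 0 < u) (hu1 : u ≤ 1) :
    |Real.exp (-a * u) / (1 - Real.exp (-2 * u)) - 1 / (2 * u)|
      ≤ 3 / 4 * (2 * |a| * Real.exp |a| + 4) := by
  have hexp : Real.exp (-2 * u) ≤ 1 / (1 + 2 * u) := by
    rw [show -2 * u = -(2 * u) by ring, Real.exp_neg, ← one_div]
    exact one_div_le_one_div_of_le (by positivity) (by linarith [Real.add_one_le_exp (2 * u)])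
  have hexp' : -2 * u + 1 ≤ Real.exp (-2 * u) := Real.add_one_le_exp _
  have hq : 1 / (1 + 2 * u) = 1 - 2 * u / (1 + 2 * u) := by field_simp; ring
  have hq1 : 2 * u / 3 ≤ 2 * u / (1 + 2 * u) := by gcongr; linarith
  have hden : 2 * u / 3 ≤ 1 - Real.exp (-2 * u) := by linarith
  have hq2 : 2 * u / (1 + 2 * u) = 2 * u - 4 * u ^ 2 / (1 + 2 * u) := by field_simp; ring
  have hq3 : 4 * u ^ 2 / (1 + 2 * u) ≤ 4 * u ^ 2 := div_le_self (by positivity) (by linarith)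
  have hden0 : 0 < 1 - Real.exp (-2 * u) := by linarith [(by positivity : 0 < 2 * u / 3)]
  have hnum1 : |Real.exp (-a * u) - 1| ≤ |a| * u * Real.exp |a| := by
    refine (abs_exp_sub_one_le_mul_exp _).trans ?_
    rw [abs_mul, abs_neg, abs_of_pos hu]
    gcongr
    nlinarith [abs_nonneg a]
  have hnum : |2 * u * Real.exp (-a * u) - (1 - Real.exp (-2 * u))|
      ≤ (2 * |a| * Real.exp |a| + 4) * u ^ 2 := by
    have e : 2 * u * Real.exp (-a * u) - (1 - Real.exp (-2 * u))
        = 2 * u * (Real.exp (-a * u) - 1) + (Real.exp (-2 * u) - 1 + 2 * u) := by ring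
    rw [e]
    refine (abs_add_le _ _).trans ?_
    rw [abs_mul, abs_of_pos (by linarith : 0 < 2 * u),
      abs_of_nonneg (by linarith : 0 ≤ Real.exp (-2 * u) - 1 + 2 * u)]
    have : 2 * u * |Real.exp (-a * u) - 1| ≤ 2 * u * (|a| * u * Real.exp |a|) := by gcongr
    linarith
  have e : Real.exp (-a * u) / (1 - Real.exp (-2 * u)) - 1 / (2 * u)
      = (2 * u * Real.exp (-a * u) - (1 - Real.exp (-2 * u)))
        / ((1 - Real.exp (-2 * u)) * (2 * u)) := by
    rw [div_sub_div _ _ hden0.ne' (by positivity)]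
    ring
  rw [e, abs_div, abs_of_pos (by positivity : 0 < (1 - Real.exp (-2 * u)) * (2 * u)),
    div_le_iff₀ (by positivity)]
  refine hnum.trans ?_
  calc (2 * |a| * Real.exp |a| + 4) * u ^ 2
      = 3 / 4 * (2 * |a| * Real.exp |a| + 4) * (2 * u / 3 * (2 * u)) := by ring
    _ ≤ _ := by gcongr

/-- Difference between the exponential kernel and the odd kernel. -/
noncomputable def kernelError (a u : ℝ) : ℝ :=
  (Ioo 0 (Real.log 2)).indicator (fun u => Real.exp (-a * u) / (1 - Real.exp (-2 * u))) u
    - oddKernel 0 u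

theorem measurable_kernelError (a : ℝ) : Measurable (kernelError a) :=
  (Measurable.indicator (by fun_prop) measurableSet_Ioo).sub (measurable_oddKernel 0)

theorem exists_abs_kernelError_le (a : ℝ) :
    ∃ M : ℝ, 0 ≤ M ∧ ∀ u : ℝ, 0 < u → |kernelError a u| ≤ M * (1 + u ^ 2)⁻¹ := by
  set M₀ := 3 / 4 * (2 * |a| * Real.exp |a| + 4) with hM₀
  have hM₀0 : 0 ≤ M₀ := by positivity
  refine ⟨2 * M₀ + 1, by positivity, fun u hu => ?_⟩
  rw [← div_eq_mul_inv]
  have hlog1 : Real.log 2 < 1 := by linarith [Real.log_two_lt_d9]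
  have hlog2 : 1 / 2 < Real.log 2 := by linarith [Real.log_two_gt_d9]
  by_cases hul : u < Real.log 2
  · have h1 := abs_exp_div_sub_le a hu (by linarith)
    have e : kernelError a u = (Real.exp (-a * u) / (1 - Real.exp (-2 * u)) - 1 / (2 * u))
        + u / (u ^ 2 + 1) / 2 := by
      rw [kernelError, indicator_of_mem (show u ∈ Ioo 0 (Real.log 2) from ⟨hu, hul⟩), oddKernel]
      have : u / (u ^ 2 + 0 ^ 2) = 1 / u := by field_simp; ring
      rw [this]
      field_simp
      ring
    have h2 : |u / (u ^ 2 + 1) / 2| ≤ 1 / 2 := by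
      rw [abs_of_pos (by positivity)]
      gcongr
      rw [div_le_one (by positivity)]
      nlinarith [sq_nonneg (u - 1)]
    rw [e]
    refine (abs_add_le _ _).trans ((add_le_add h1 h2).trans ?_)
    rw [le_div_iff₀ (by positivity), ← hM₀]
    have hu2 : 1 + u ^ 2 ≤ 2 := by nlinarith
    nlinarith [mul_le_mul_of_nonneg_left hu2 (by linarith : 0 ≤ M₀ + 1 / 2)]
  · push Not at hul
    have e : kernelError a u = -((1 / u) / (1 + u ^ 2) / 2) := by
      rw [kernelError, indicator_of_notMem (by simp [hul]), oddKernel]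
      field_simp
      ring
    rw [e, abs_neg, abs_of_pos (by positivity), div_right_comm]
    gcongr
    have : 1 / u ≤ 2 := by
      rw [div_le_iff₀ hu]; linarith
    linarith

theorem lintegral_Ioi_symm_le {κ : ℝ → ℝ≥0∞} (hκ : ∀ u, κ (-u) = κ u) (hκm : Measurable κ)
    {h : ℝ → ℝ≥0∞} (hh : Measurable h) (x : ℝ) :
    ∫⁻ u in Ioi (0 : ℝ), κ u * (h (x - u) + h (x + u)) ≤ ∫⁻ t, κ (x - t) * h t := by
  have e1 : ∫⁻ t, κ (x - t) * h t = ∫⁻ u, κ u * h (x - u) := by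
    rw [← lintegral_sub_left_eq_self (fun u => κ u * h (x - u)) x]
    simp
  have e2 : ∫⁻ u in Ioi (0 : ℝ), κ u * h (x + u) = ∫⁻ u in Iio (0 : ℝ), κ u * h (x - u) := by
    have := (Measure.measurePreserving_neg (volume : Measure ℝ)).setLIntegral_comp_preimage
      (s := Iio 0) measurableSet_Iio (f := fun u => κ u * h (x - u)) (by fun_prop)
    rw [← this]
    simp [hκ]
  simp only [mul_add]
  rw [lintegral_add_left (by fun_prop), e2, e1,
    ← lintegral_add_compl (μ := volume) (fun u => κ u * h (x - u))
      (measurableSet_Ioi (a := (0 : ℝ)))]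
  refine add_le_add le_rfl (lintegral_mono_set fun u hu => ?_)
  simpa using (le_of_lt hu : u ≤ 0)

theorem enorm_expKernel_le {a b M₁ M₂ : ℝ} (hM₁ : 0 ≤ M₁) (hM₂ : 0 ≤ M₂)
    (ha : ∀ u : ℝ, 0 < u → |kernelError a u| ≤ M₁ * (1 + u ^ 2)⁻¹)
    (hb : ∀ u : ℝ, 0 < u → |kernelError b u| ≤ M₂ * (1 + u ^ 2)⁻¹)
    {g : ℝ → ℂ} (hg : Continuous g) {N : ℝ} (hN : ∀ t, N < |t| → g t = 0) {x L : ℝ}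
    (hL : ∀ u, 0 < u → u ≤ |x| + |N| → ‖g (x - u) - g (x + u)‖ ≤ L * u) :
    ‖∫ u in Ioo (0 : ℝ) (Real.log 2), ((Real.exp (-a * u) : ℂ) * g (x - u)
        - (Real.exp (-b * u) : ℂ) * g (x + u)) / ((1 - Real.exp (-2 * u) : ℝ) : ℂ)‖ₑ
      ≤ ‖∫ u in Ioi (0 : ℝ), (oddKernel 0 u : ℂ) * (g (x - u) - g (x + u))‖ₑ
        + ∫⁻ t, ENNReal.ofReal ((M₁ + M₂) * (1 + (x - t) ^ 2)⁻¹) * ‖g t‖ₑ := by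
  have hcs : HasCompactSupport g :=
    HasCompactSupport.intro (isCompact_Icc (a := -N) (b := N)) fun t ht => hN t (by
      by_contra hcon
      exact ht (abs_le.1 (not_lt.1 hcon)))
  have hgi : Integrable g := hg.integrable_of_hasCompactSupport hcs
  have mk := measurable_kernelError
  have mo := measurable_oddKernel 0
  have mg := hg.measurable
  have hodd : Integrable (fun u => (oddKernel 0 u : ℂ) * (g (x - u) - g (x + u)))
      (volume.restrict (Ioi 0)) := by
    obtain ⟨d, hd, hle⟩ := exists_oddKernel_dominator hN hL
    refine hd.mono' (Measurable.aestronglyMeasurable (by fun_prop)) ?_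
    filter_upwards [ae_restrict_mem measurableSet_Ioi] with u hu
    exact hle 0 le_rfl u hu
  have hbound : ∀ {c M : ℝ}, 0 ≤ M → (∀ u : ℝ, 0 < u → |kernelError c u| ≤ M * (1 + u ^ 2)⁻¹) →
      ∀ᵐ u ∂(volume.restrict (Ioi (0 : ℝ))), ‖(kernelError c u : ℂ)‖ ≤ M := by
    intro c M hM hc
    filter_upwards [ae_restrict_mem measurableSet_Ioi] with u hu
    rw [Complex.norm_real]
    refine (hc u hu).trans (mul_le_of_le_one_right hM (inv_le_one_of_one_le₀ ?_))
    nlinarith [sq_nonneg u]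
  have herr1 : Integrable (fun u => (kernelError a u : ℂ) * g (x - u))
      (volume.restrict (Ioi 0)) :=
    (hgi.comp_sub_left x).integrableOn.bdd_mul
      (Measurable.aestronglyMeasurable (by have := mk a; fun_prop)) (hbound hM₁ ha)
  have herr2 : Integrable (fun u => (kernelError b u : ℂ) * g (x + u))
      (volume.restrict (Ioi 0)) :=
    (hgi.comp_add_left x).integrableOn.bdd_mul
      (Measurable.aestronglyMeasurable (by have := mk b; fun_prop)) (hbound hM₂ hb)
  have herr : Integrable
      (fun u => (kernelError a u : ℂ) * g (x - u) - (kernelError b u : ℂ) * g (x + u))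
      (volume.restrict (Ioi 0)) := herr1.sub herr2
  have hsplit : ∫ u in Ioo (0 : ℝ) (Real.log 2), ((Real.exp (-a * u) : ℂ) * g (x - u)
        - (Real.exp (-b * u) : ℂ) * g (x + u)) / ((1 - Real.exp (-2 * u) : ℝ) : ℂ)
      = (∫ u in Ioi (0 : ℝ), (oddKernel 0 u : ℂ) * (g (x - u) - g (x + u)))
        + ∫ u in Ioi (0 : ℝ),
          ((kernelError a u : ℂ) * g (x - u) - (kernelError b u : ℂ) * g (x + u)) := by
    rw [← integral_add hodd herr]
    have : Ioo (0 : ℝ) (Real.log 2) = Ioo (0 : ℝ) (Real.log 2) ∩ Ioi 0 :=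
      (inter_eq_left.2 Ioo_subset_Ioi_self).symm
    rw [this, ← Measure.restrict_restrict measurableSet_Ioo,
      ← integral_indicator measurableSet_Ioo]
    congr 1; ext u
    by_cases hu : u ∈ Ioo (0 : ℝ) (Real.log 2)
    · simp only [kernelError, indicator_of_mem hu]
      push_cast; ring
    · simp only [kernelError, indicator_of_notMem hu]
      push_cast; ring
  rw [hsplit]
  refine (enorm_add_le _ _).trans ?_
  gcongr
  refine (enorm_integral_le_lintegral_enorm _).trans ?_
  refine le_trans ?_ (lintegral_Ioi_symm_le
    (κ := fun u => ENNReal.ofReal ((M₁ + M₂) * (1 + u ^ 2)⁻¹)) (by simp) (by fun_prop)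
    (h := fun t => ‖g t‖ₑ) (by fun_prop) x)
  refine setLIntegral_mono (by fun_prop) fun u hu => ?_
  rw [mul_add]
  refine (enorm_sub_le).trans (add_le_add ?_ ?_)
  · rw [enorm_mul]
    gcongr
    rw [← ofReal_norm, Complex.norm_real]
    refine ENNReal.ofReal_le_ofReal ((ha u hu).trans ?_)
    gcongr; linarith
  · rw [enorm_mul]
    gcongr
    rw [← ofReal_norm, Complex.norm_real]
    refine ENNReal.ofReal_le_ofReal ((hb u hu).trans ?_)
    gcongr; linarith

theorem exists_lintegral_expKernel_le {p : ℝ} (hp : 1 < p) (a b : ℝ) :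
    ∃ C : ℝ≥0∞, C ≠ ∞ ∧ ∀ g : ℝ → ℂ, Continuous g → ∀ N : ℝ, (∀ t, N < |t| → g t = 0) →
      (∀ x, ∃ L : ℝ, ∀ u, 0 < u → u ≤ |x| + |N| → ‖g (x - u) - g (x + u)‖ ≤ L * u) →
      (∫⁻ x, ‖∫ u in Ioo (0 : ℝ) (Real.log 2), ((Real.exp (-a * u) : ℂ) * g (x - u)
        - (Real.exp (-b * u) : ℂ) * g (x + u)) / ((1 - Real.exp (-2 * u) : ℝ) : ℂ)‖ₑ ^ p)
          ^ (1 / p)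
        ≤ C * (∫⁻ x, ‖g x‖ₑ ^ p) ^ (1 / p) := by
  have hp0 : 0 < p := by linarith
  have hp0' : ENNReal.ofReal p ≠ 0 := by simpa using hp0
  obtain ⟨C, hC, hbd⟩ := exists_eLpNorm_oddKernel_zero_le hp
  obtain ⟨M₁, hM₁, ha⟩ := exists_abs_kernelError_le a
  obtain ⟨M₂, hM₂, hb⟩ := exists_abs_kernelError_le b
  set κ : ℝ → ℝ≥0∞ := fun u => ENNReal.ofReal ((M₁ + M₂) * (1 + u ^ 2)⁻¹) with hκ
  have hκm : Measurable κ := by simp only [hκ]; fun_prop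
  have hκint : ∫⁻ u, κ u ≠ ∞ :=
    (integrable_inv_one_add_sq.const_mul (M₁ + M₂)).lintegral_lt_top.ne
  refine ⟨C + ∫⁻ u, κ u, by finiteness, fun g hg N hN hL => ?_⟩
  obtain ⟨mS, bS⟩ := hbd g hg N hN hL
  set S := fun x => ∫ u in Ioi (0 : ℝ), (oddKernel 0 u : ℂ) * (g (x - u) - g (x + u)) with hS
  set E : ℝ → ℝ≥0∞ := fun x => ∫⁻ t, κ (x - t) * ‖g t‖ₑ with hE
  have mg := hg.measurable
  have mE : Measurable E := Measurable.lintegral_prod_right'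
    (f := fun z : ℝ × ℝ => κ (z.1 - z.2) * ‖g z.2‖ₑ) (by fun_prop)
  rw [eLpNorm_eq_lintegral_rpow_enorm_toReal hp0' ENNReal.ofReal_ne_top,
    eLpNorm_eq_lintegral_rpow_enorm_toReal hp0' ENNReal.ofReal_ne_top,
    ENNReal.toReal_ofReal hp0.le] at bS
  calc _ ≤ (∫⁻ x, ((fun x => ‖S x‖ₑ) + E) x ^ p) ^ (1 / p) := by
        gcongr with x
        obtain ⟨L, hLx⟩ := hL x
        exact enorm_expKernel_le hM₁ hM₂ ha hb hg hN hLx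
    _ ≤ (∫⁻ x, ‖S x‖ₑ ^ p) ^ (1 / p) + (∫⁻ x, E x ^ p) ^ (1 / p) :=
        ENNReal.lintegral_Lp_add_le mS.enorm mE.aemeasurable hp.le
    _ ≤ C * (∫⁻ x, ‖g x‖ₑ ^ p) ^ (1 / p)
        + ((∫⁻ u, κ u) ^ p * ∫⁻ x, ‖g x‖ₑ ^ p) ^ (1 / p) := by
        gcongr
        exact lintegral_conv_rpow_le hp hκm (by fun_prop)
    _ = _ := by
        rw [ENNReal.mul_rpow_of_nonneg _ _ (by positivity), ← ENNReal.rpow_mul,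
          mul_one_div_cancel hp0.ne', ENNReal.rpow_one, add_mul]

/-- The change of variables `t = exp (-u)`. -/
theorem setIntegral_Ioo_half_one_eq (F : ℝ → ℂ) :
    ∫ t in Ioo (1 / 2 : ℝ) 1, F t
      = ∫ u in Ioo (0 : ℝ) (Real.log 2), (Real.exp (-u) : ℂ) * F (Real.exp (-u)) := by
  have himg : (fun u => Real.exp (-u)) '' Ioo (0 : ℝ) (Real.log 2) = Ioo (1 / 2 : ℝ) 1 := by
    ext t
    constructor
    · rintro ⟨u, ⟨h0, h1⟩, rfl⟩
      refine ⟨?_, by simpa using h0⟩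
      have := Real.exp_lt_exp.2 (neg_lt_neg h1)
      rwa [Real.exp_neg, Real.exp_log two_pos, ← one_div] at this
    · rintro ⟨h0, h1⟩
      have ht : 0 < t := by linarith
      refine ⟨-Real.log t, ⟨by simpa using Real.log_neg ht h1, ?_⟩, by simp [Real.exp_log ht]⟩
      rw [← Real.log_inv]
      refine Real.log_lt_log (by positivity) ?_
      rw [inv_lt_comm₀ ht two_pos, ← one_div]
      exact h0
  rw [← himg, integral_image_eq_integral_abs_deriv_smul measurableSet_Ioo
    (f' := fun u => -Real.exp (-u))
    (fun u _ => by simpa using ((hasDerivAt_neg u).exp).hasDerivWithinAt)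
    (fun u _ v _ h => by simpa using h)]
  simp [Complex.real_smul, -Complex.ofReal_exp]

/-- The change of variables `r = exp x`. -/
theorem setIntegral_Ioi_div_eq (F : ℝ → ℝ) :
    ∫ r in Ioi (0 : ℝ), F r / r = ∫ x, F (Real.exp x) := by
  rw [← Real.range_exp, ← image_univ, integral_image_eq_integral_abs_deriv_smul MeasurableSet.univ
    (fun x _ => (Real.hasDerivAt_exp x).hasDerivWithinAt) Real.exp_injective.injOn]
  simp [mul_div_cancel₀]

theorem integral_norm_rpow_le_toReal_lintegral {p : ℝ} (hp : 0 ≤ p) {G : ℝ → ℂ}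
    (h : ∫⁻ x, ‖G x‖ₑ ^ p ≠ ∞) :
    ∫ x, ‖G x‖ ^ p ≤ (∫⁻ x, ‖G x‖ₑ ^ p).toReal := by
  refine (Real.le_norm_self _).trans ?_
  rw [← toReal_enorm]
  refine ENNReal.toReal_mono h ((enorm_integral_le_lintegral_enorm _).trans_eq ?_)
  congr 1 with x
  rw [Real.enorm_rpow_of_nonneg (norm_nonneg _) hp, enorm_norm]

theorem exists_comp_exp_eq_zero {f : ℝ → ℂ} (hf : HasCompactSupport f)
    (hpos : tsupport f ⊆ Ioi (0 : ℝ)) : ∃ N : ℝ, ∀ t, N < |t| → f (Real.exp t) = 0 := by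
  have hcpt : IsCompact (Real.log '' tsupport f) :=
    IsCompact.image_of_continuousOn hf
      (Real.continuousOn_log.mono fun r hr => (ne_of_gt (hpos hr) : r ≠ 0))
  obtain ⟨N, hN⟩ := hcpt.isBounded.exists_norm_le
  refine ⟨N, fun t ht => ?_⟩
  by_contra hne
  have := hN t ⟨Real.exp t, subset_tsupport f hne, Real.log_exp t⟩
  rw [Real.norm_eq_abs] at this
  linarith

theorem norm_comp_exp_sub_le {f : ℝ → ℂ} {K : ℝ≥0} (hf : LipschitzWith K f) (x : ℝ) {u U : ℝ}
    (hu : 0 < u) (huU : u ≤ U) :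
    ‖f (Real.exp (x - u)) - f (Real.exp (x + u))‖ ≤ K * (2 * Real.exp (x + U)) * u := by
  refine (hf.norm_sub_le _ _).trans ?_
  rw [mul_assoc]
  gcongr
  have h1 : Real.exp (x - u) = Real.exp (x + u) * Real.exp (-2 * u) := by
    rw [← Real.exp_add]; ring_nf
  have h2 : Real.exp (x - u) ≤ Real.exp (x + u) := Real.exp_le_exp.2 (by linarith)
  have h3 : Real.exp (x + u) ≤ Real.exp (x + U) := Real.exp_le_exp.2 (by linarith)
  rw [Real.norm_eq_abs, abs_of_nonpos (by linarith)]
  have h4 := Real.add_one_le_exp (-2 * u)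
  have h5 := Real.exp_pos (x + u)
  calc -(Real.exp (x - u) - Real.exp (x + u)) = Real.exp (x + u) * (1 - Real.exp (-2 * u)) := by
        rw [h1]; ring
    _ ≤ Real.exp (x + u) * (2 * u) := by gcongr; linarith
    _ ≤ Real.exp (x + U) * (2 * u) := by gcongr
    _ = _ := by ring

/-- In the variables `r = exp x`, `t = exp (-u)` the operator becomes a convolution. -/
theorem setIntegral_rpow_kernel_exp (a b : ℝ) (f : ℝ → ℂ) (x : ℝ) :
    ∫ t in Ioo (1 / 2 : ℝ) 1, (((t ^ a : ℝ) : ℂ) * f (Real.exp x * t)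
        - ((t ^ b : ℝ) : ℂ) * f (Real.exp x / t)) / (((1 - t ^ 2) * t : ℝ) : ℂ)
      = ∫ u in Ioo (0 : ℝ) (Real.log 2), ((Real.exp (-a * u) : ℂ) * f (Real.exp (x - u))
        - (Real.exp (-b * u) : ℂ) * f (Real.exp (x + u))) / ((1 - Real.exp (-2 * u) : ℝ) : ℂ) := by
  rw [setIntegral_Ioo_half_one_eq]
  congr 1 with u
  have hpow : ∀ c : ℝ, Real.exp (-u) ^ c = Real.exp (-c * u) := fun c => by
    rw [← Real.exp_mul]; ring_nf
  have hsq : Real.exp (-u) ^ 2 = Real.exp (-2 * u) := by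
    rw [← Real.exp_nat_mul]; ring_nf
  have hdiv : Real.exp x / Real.exp (-u) = Real.exp (x + u) := by
    rw [← Real.exp_sub]; ring_nf
  have hne : (Real.exp (-u) : ℂ) ≠ 0 := Complex.ofReal_ne_zero.2 (Real.exp_pos _).ne'
  rw [hpow, hpow, hsq, hdiv, ← Real.exp_add, ← sub_eq_add_neg, Complex.ofReal_mul,
    mul_div_assoc', mul_comm (Real.exp (-u) : ℂ), mul_div_mul_right _ _ hne]

theorem exists_halfline_bound {p : ℝ} (hp : 1 < p) (a b : ℝ) :
    ∃ C : ℝ, 0 < C ∧ ∀ f : ℝ → ℂ, (∃ K : ℝ≥0, LipschitzWith K f) → HasCompactSupport f →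
      tsupport f ⊆ Ioi (0 : ℝ) →
      (∫ r in Ioi (0 : ℝ), ‖∫ t in Ioo (1 / 2 : ℝ) 1, (((t ^ a : ℝ) : ℂ) * f (r * t)
          - ((t ^ b : ℝ) : ℂ) * f (r / t)) / (((1 - t ^ 2) * t : ℝ) : ℂ)‖ ^ p / r) ^ (1 / p)
        ≤ C * (∫ r in Ioi (0 : ℝ), ‖f r‖ ^ p / r) ^ (1 / p) := by
  have hp0 : 0 < p := by linarith
  obtain ⟨C, hC, hbd⟩ := exists_lintegral_expKernel_le hp a b
  refine ⟨C.toReal + 1, by positivity, fun f ⟨K, hK⟩ hf hpos => ?_⟩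
  obtain ⟨N, hN⟩ := exists_comp_exp_eq_zero hf hpos
  set g : ℝ → ℂ := fun x => f (Real.exp x) with hg
  have hgc : Continuous g := hK.continuous.comp Real.continuous_exp
  have hgs : HasCompactSupport fun x => ‖g x‖ ^ p :=
    HasCompactSupport.intro (isCompact_Icc (a := -N) (b := N)) fun t ht => by
      have : g t = 0 := hN t (by
        by_contra hcon
        exact ht (abs_le.1 (not_lt.1 hcon)))
      simp [this, hp0.ne']
  have hgi : Integrable fun x => ‖g x‖ ^ p :=
    (hgc.norm.rpow_const fun _ => Or.inr hp0.le).integrable_of_hasCompactSupport hgs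
  have henorm : ∀ x, ENNReal.ofReal (‖g x‖ ^ p) = ‖g x‖ₑ ^ p := fun x => by
    rw [← ENNReal.ofReal_rpow_of_nonneg (norm_nonneg _) hp0.le, ofReal_norm]
  have hgint : ∫ x, ‖g x‖ ^ p = (∫⁻ x, ‖g x‖ₑ ^ p).toReal := by
    rw [integral_eq_lintegral_of_nonneg_ae (ae_of_all _ fun x => by positivity)
      hgi.aestronglyMeasurable]
    simp only [henorm]
  have hgfin : ∫⁻ x, ‖g x‖ₑ ^ p ≠ ∞ := by
    simpa only [henorm] using hgi.lintegral_lt_top.ne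
  have hmain := hbd g hgc N hN fun x =>
    ⟨K * (2 * Real.exp (x + (|x| + |N|))), fun u hu hU => norm_comp_exp_sub_le hK x hu hU⟩
  rw [setIntegral_Ioi_div_eq, setIntegral_Ioi_div_eq (fun r => ‖f r‖ ^ p)]
  simp only [setIntegral_rpow_kernel_exp]
  have hrhs : C * (∫⁻ x, ‖g x‖ₑ ^ p) ^ (1 / p) ≠ ∞ :=
    ENNReal.mul_ne_top hC (ENNReal.rpow_ne_top_of_nonneg (by positivity) hgfin)
  have hfin := ne_top_of_le_ne_top hrhs hmain
  rw [Ne, ENNReal.rpow_eq_top_iff_of_pos (by positivity)] at hfin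
  calc _ ≤ _ := Real.rpow_le_rpow (integral_nonneg fun x => by positivity)
        (integral_norm_rpow_le_toReal_lintegral hp0.le hfin) (by positivity)
    _ ≤ C.toReal * (∫ x, ‖g x‖ ^ p) ^ (1 / p) := by
        rw [hgint, ENNReal.toReal_rpow, ENNReal.toReal_rpow, ← ENNReal.toReal_mul]
        exact ENNReal.toReal_mono hrhs hmain
    _ ≤ _ := by
        gcongr
        linarith

end SingularIntegral

open MeasureTheory

/-- Let `d ≥ 2`, `1 < p < ∞`, `μ, ν ≥ 0`, and set `a = μ + 1 + d/2 − d/p`,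
`b = d/p − d/2 + 1 + ν`.  There is a constant `C > 0` such that for every Lipschitz
function `f` with compact support in `(0,∞)`, the singular integral
`Tf(r) = ∫_{1/2}^1 (tᵃ f(rt) − tᵇ f(r/t)) / ((1−t²)t) dt` satisfies
`‖Tf‖_{L^p(dr/r)} ≤ C ‖f‖_{L^p(dr/r)}`. -/
theorem singular_integral_halfline_bound (d : ℕ) (hd : 2 ≤ d) (p : ℝ) (hp : 1 < p)
    (μ ν : ℝ) (hμ : 0 ≤ μ) (hν : 0 ≤ ν) :
    ∃ C : ℝ, 0 < C ∧
      ∀ f : ℝ → ℂ, (∃ K : NNReal, LipschitzWith K f) → HasCompactSupport f →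
        tsupport f ⊆ Set.Ioi (0 : ℝ) →
        (∫ r in Set.Ioi (0 : ℝ),
            ‖∫ t in Set.Ioo (1 / 2 : ℝ) 1,
                (((t ^ (μ + 1 + (d : ℝ) / 2 - (d : ℝ) / p) : ℝ) : ℂ) * f (r * t) -
                    ((t ^ ((d : ℝ) / p - (d : ℝ) / 2 + 1 + ν) : ℝ) : ℂ) * f (r / t)) /
                  (((1 - t ^ 2) * t : ℝ) : ℂ)‖ ^ p / r) ^ (1 / p)
          ≤ C * (∫ r in Set.Ioi (0 : ℝ), ‖f r‖ ^ p / r) ^ (1 / p) := by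
  exact exists_halfline_bound hp _ _
end

section
/- Fix real numbers a > 0 and b > −1. Then there exists a constant C = C(a, b) such that for every natural number n, | Γ(a+n+1)·Γ(b+n+1) / (Γ(a+b+n+1)·Γ(n+1)) − 1 + a·b/(n+1) | ≤ C / (n+1)². In particular, Γ(a+n+1)Γ(b+n+1)/(Γ(a+b+n+1)Γ(n+1)) = 1 − ab/(n+1) + O(1/(n+1)²) as n → ∞. -/
open Filter Topology

/-- The increments of a null sequence control it: if they are dominated by the decrements of
another null sequence, so is the sequence itself. -/
theorem abs_le_of_abs_sub_succ_le {u g : ℕ → ℝ} (hu : Tendsto u atTop (𝓝 0))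
    (hg : Tendsto g atTop (𝓝 0)) (h : ∀ n, |u (n + 1) - u n| ≤ g n - g (n + 1)) (n : ℕ) :
    |u n| ≤ g n := by
  have h_add : Antitone fun k => g k + u k :=
    antitone_nat_of_succ_le fun k => by linarith [(abs_le.mp (h k)).2]
  have h_sub : Antitone fun k => g k - u k :=
    antitone_nat_of_succ_le fun k => by linarith [(abs_le.mp (h k)).1]
  have h₁ := h_add.le_of_tendsto (by simpa using hg.add hu) n
  have h₂ := h_sub.le_of_tendsto (by simpa using hg.sub hu) n
  exact abs_le.mpr ⟨by linarith, by linarith⟩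

theorem Gamma_add_nat_add_one_eq_prod {s : ℝ} (hs : 0 < s) (n : ℕ) :
    Real.Gamma (s + n + 1) = Real.Gamma s * ∏ j ∈ Finset.range (n + 1), (s + j) := by
  induction n with
  | zero => simp [Real.Gamma_add_one hs.ne', mul_comm]
  | succ n ih =>
    rw [Finset.prod_range_succ, ← mul_assoc, ← ih,
      Real.Gamma_add_one (by positivity : s + ((n + 1 : ℕ) : ℝ) ≠ 0)]
    push_cast
    rw [← add_assoc, mul_comm]

theorem Gamma_add_nat_add_one_eq_div_GammaSeq {s : ℝ} (hs : 0 < s) {n : ℕ} (hn : n ≠ 0) :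
    Real.Gamma (s + n + 1) =
      Real.Gamma s * ((n : ℝ) ^ s * n.factorial) / Real.GammaSeq s n := by
  have hprod : 0 < ∏ j ∈ Finset.range (n + 1), (s + j) :=
    Finset.prod_pos fun j _ => by positivity
  have hn' : 0 < (n : ℝ) := by positivity
  rw [Gamma_add_nat_add_one_eq_prod hs, Real.GammaSeq]
  field_simp

/-- The quotient `Γ(a+n+1) Γ(b+n+1) / (Γ(a+b+n+1) Γ(n+1))`. -/
noncomputable def gammaRatio (a b : ℝ) (n : ℕ) : ℝ :=
  Real.Gamma (a + n + 1) * Real.Gamma (b + n + 1) /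
    (Real.Gamma (a + b + n + 1) * Real.Gamma (n + 1))

section

variable {a b : ℝ}

theorem gammaRatio_succ (ha : -1 < a) (hb : -1 < b) (hab : -1 < a + b) (n : ℕ) :
    gammaRatio a b (n + 1) =
      gammaRatio a b n * (1 + a * b / ((a + b + n + 1) * (n + 1))) := by
  have hn : (0 : ℝ) ≤ n := n.cast_nonneg
  have h₁ : 0 < a + n + 1 := by linarith
  have h₂ : 0 < b + n + 1 := by linarith
  have h₃ : 0 < a + b + n + 1 := by linarith
  have h₄ : (0 : ℝ) < n + 1 := by linarith
  have g₃ := (Real.Gamma_pos_of_pos h₃).ne'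
  have g₄ := (Real.Gamma_pos_of_pos h₄).ne'
  simp only [gammaRatio]
  push_cast
  simp only [← add_assoc]
  rw [Real.Gamma_add_one h₁.ne', Real.Gamma_add_one h₂.ne', Real.Gamma_add_one h₃.ne',
    Real.Gamma_add_one h₄.ne']
  field_simp
  ring

theorem tendsto_gammaRatio (ha : -1 < a) (hb : -1 < b) (hab : -1 < a + b) :
    Tendsto (gammaRatio a b) atTop (𝓝 1) := by
  have h₁ : 0 < a + 1 := by linarith
  have h₂ : 0 < b + 1 := by linarith
  have h₃ : 0 < a + b + 1 := by linarith
  have g₁ := (Real.Gamma_pos_of_pos h₁).ne'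
  have g₂ := (Real.Gamma_pos_of_pos h₂).ne'
  have g₃ := (Real.Gamma_pos_of_pos h₃).ne'
  have g₄ := (Real.Gamma_pos_of_pos one_pos).ne'
  have key : Tendsto (fun n : ℕ =>
      Real.Gamma (a + 1) / Real.GammaSeq (a + 1) n * (Real.Gamma (b + 1) / Real.GammaSeq (b + 1) n)
        / (Real.Gamma (a + b + 1) / Real.GammaSeq (a + b + 1) n *
          (Real.Gamma 1 / Real.GammaSeq 1 n))) atTop (𝓝 1) := by
    have aux {s : ℝ} (hs : Real.Gamma s ≠ 0) :
        Tendsto (fun n : ℕ => Real.Gamma s / Real.GammaSeq s n) atTop (𝓝 1) := by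
      simpa only [div_self hs, Pi.div_def] using
        (tendsto_const_nhds (x := Real.Gamma s)).div (Real.GammaSeq_tendsto_Gamma s) hs
    simpa only [mul_one, div_one, Pi.div_def] using
      ((aux g₁).mul (aux g₂)).div ((aux g₃).mul (aux g₄)) (by norm_num)
  rw [← tendsto_add_atTop_iff_nat 1]
  refine key.congr' ?_
  filter_upwards [eventually_ne_atTop 0] with n hn
  have hn' : 0 < (n : ℝ) := by positivity
  have hpow : (n : ℝ) ^ (a + 1) * (n : ℝ) ^ (b + 1) = (n : ℝ) ^ (a + b + 1) * (n : ℝ) ^ (1 : ℝ) := by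
    rw [← Real.rpow_add hn', ← Real.rpow_add hn']
    ring_nf
  have hshift (s : ℝ) : s + ((n + 1 : ℕ) : ℝ) + 1 = s + 1 + n + 1 := by push_cast; ring
  have hshift' : ((n + 1 : ℕ) : ℝ) + 1 = 1 + n + 1 := by push_cast; ring
  rw [gammaRatio, hshift, hshift, hshift, hshift', Gamma_add_nat_add_one_eq_div_GammaSeq h₁ hn,
    Gamma_add_nat_add_one_eq_div_GammaSeq h₂ hn, Gamma_add_nat_add_one_eq_div_GammaSeq h₃ hn,
    Gamma_add_nat_add_one_eq_div_GammaSeq one_pos hn]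
  have hscale : (n : ℝ) ^ (a + b + 1) * (n : ℝ) ^ (1 : ℝ) * (n.factorial : ℝ) ^ 2 ≠ 0 := by
    positivity
  rw [← mul_div_mul_right _ _ hscale]
  nth_rewrite 1 [← hpow]
  congr 1 <;> ring

theorem min_one_mul_le (a b : ℝ) (n : ℕ) :
    min 1 (a + b + 1) * (n + 1) ≤ a + b + n + 1 := by
  have hn : (0 : ℝ) ≤ n := n.cast_nonneg
  nlinarith [min_le_left 1 (a + b + 1), min_le_right 1 (a + b + 1)]

theorem exists_abs_gammaRatio_sub_one_le (ha : -1 < a) (hb : -1 < b) (hab : -1 < a + b) :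
    ∃ C : ℝ, ∀ n : ℕ, |gammaRatio a b n - 1| ≤ C / (n + 1) := by
  have hlim := tendsto_gammaRatio ha hb hab
  obtain ⟨B, hB⟩ := hlim.abs.bddAbove_range
  have hB' (n : ℕ) : |gammaRatio a b n| ≤ B := hB ⟨n, rfl⟩
  have hB₀ : 0 ≤ B := (abs_nonneg _).trans (hB' 0)
  set c := min 1 (a + b + 1) with hc
  have hc₀ : 0 < c := lt_min one_pos (by linarith)
  set K := B * |a * b| / c with hK
  have hK₀ : 0 ≤ K := by positivity
  refine ⟨2 * K, abs_le_of_abs_sub_succ_le (g := fun n : ℕ => 2 * K / (n + 1))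
    (by simpa using hlim.sub_const 1) ?_ fun n => ?_⟩
  · simpa [div_eq_mul_inv] using
      (tendsto_one_div_add_atTop_nhds_zero_nat (𝕜 := ℝ)).const_mul (2 * K)
  have hm : (1 : ℝ) ≤ n + 1 := by simp
  have hd := min_one_mul_le a b n
  rw [← hc] at hd
  push_cast
  set m : ℝ := n + 1
  have hcm : 0 < c * m := by positivity
  have hd₀ : 0 < a + b + n + 1 := hcm.trans_le hd
  calc |gammaRatio a b (n + 1) - 1 - (gammaRatio a b n - 1)|
      = |gammaRatio a b n| * (|a * b| / ((a + b + n + 1) * m)) := by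
        have hpos : 0 < (a + b + n + 1) * m := mul_pos hd₀ (by positivity)
        rw [gammaRatio_succ ha hb hab, ← abs_of_pos hpos, ← abs_div, ← abs_mul, abs_of_pos hpos]
        congr 1
        ring
    _ ≤ B * (|a * b| / (c * m * m)) := by
        gcongr
        · exact hB' n
    _ = K / m ^ 2 := by rw [hK]; field_simp
    _ ≤ 2 * K / (m * (m + 1)) := by
        rw [div_le_div_iff₀ (by positivity) (by positivity)]
        have : m * (m + 1) ≤ 2 * m ^ 2 := by nlinarith
        nlinarith
    _ = 2 * K / m - 2 * K / (m + 1) := by field_simp; ring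

theorem exists_abs_gammaRatio_sub_one_add_le (ha : -1 < a) (hb : -1 < b) (hab : -1 < a + b) :
    ∃ C : ℝ, ∀ n : ℕ,
      |gammaRatio a b n - 1 + a * b / (n + 1)| ≤ C / (n + 1) ^ 2 := by
  have hlim := tendsto_gammaRatio ha hb hab
  have hinv := tendsto_one_div_add_atTop_nhds_zero_nat (𝕜 := ℝ)
  obtain ⟨B, hB⟩ := exists_abs_gammaRatio_sub_one_le ha hb hab
  have hB₀ : 0 ≤ B := by simpa using (abs_nonneg _).trans (hB 0)
  set c := min 1 (a + b + 1) with hc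
  have hc₀ : 0 < c := lt_min one_pos (by linarith)
  set K := |a * b| * (B + |1 - a - b|) / c with hK
  have hK₀ : 0 ≤ K := by positivity
  refine ⟨2 * K, abs_le_of_abs_sub_succ_le (g := fun n : ℕ => 2 * K / (n + 1) ^ 2)
    ?_ ?_ fun n => ?_⟩
  · simpa [div_eq_mul_inv] using (hlim.sub_const 1).add (hinv.const_mul (a * b))
  · simpa [div_eq_mul_inv] using (hinv.pow 2).const_mul (2 * K)
  have hm : (1 : ℝ) ≤ n + 1 := by simp
  have hd := min_one_mul_le a b n
  have hBn := hB n
  rw [← hc] at hd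
  rw [gammaRatio_succ ha hb hab]
  push_cast
  have hdm : a + b + n + 1 = a + b + (n + 1) := by ring
  rw [hdm] at hd ⊢
  set m : ℝ := n + 1
  set r := gammaRatio a b n
  have hcm : 0 < c * m := by positivity
  have hd₀ : 0 < a + b + m := hcm.trans_le hd
  calc |r * (1 + a * b / ((a + b + m) * m)) - 1 + a * b / (m + 1) - (r - 1 + a * b / m)|
      = |a * b * ((r - 1) + (1 - a - b) / (m + 1)) / ((a + b + m) * m)| := by
        congr 1
        field_simp
        ring
    _ = |a * b| * |(r - 1) + (1 - a - b) / (m + 1)| / ((a + b + m) * m) := by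
        rw [abs_div, abs_mul, abs_of_pos (by positivity : 0 < (a + b + m) * m)]
    _ ≤ |a * b| * (B / m + |1 - a - b| / m) / (c * m * m) := by
        gcongr
        refine (abs_add_le _ _).trans (add_le_add hBn ?_)
        rw [abs_div, abs_of_pos (by positivity : 0 < m + 1)]
        gcongr
        linarith
    _ = K / m ^ 3 := by rw [hK]; field_simp
    _ ≤ 2 * K * (2 * m + 1) / (m ^ 2 * (m + 1) ^ 2) := by
        rw [div_le_div_iff₀ (by positivity) (by positivity)]
        have : m ^ 2 * (m + 1) ^ 2 ≤ 2 * (2 * m + 1) * m ^ 3 := by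
          have : (m + 1) ^ 2 ≤ 2 * (2 * m + 1) * m := by nlinarith
          nlinarith [mul_le_mul_of_nonneg_left this (sq_nonneg m)]
        nlinarith [mul_le_mul_of_nonneg_left this hK₀]
    _ = 2 * K / m ^ 2 - 2 * K / (m + 1) ^ 2 := by field_simp; ring

end

/-- Fix real numbers `a > 0` and `b > -1`. Then there exists a constant `C = C(a,b)` such
that for every natural number `n`,
`|Γ(a+n+1)·Γ(b+n+1)/(Γ(a+b+n+1)·Γ(n+1)) − 1 + a·b/(n+1)| ≤ C/(n+1)²`. -/
theorem gamma_ratio_asymptotic (a b : ℝ) (ha : 0 < a) (hb : -1 < b) :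
    ∃ C : ℝ, ∀ n : ℕ,
      |Real.Gamma (a + n + 1) * Real.Gamma (b + n + 1) /
          (Real.Gamma (a + b + n + 1) * Real.Gamma (n + 1))
        - 1 + a * b / (n + 1)| ≤ C / (n + 1) ^ 2 :=
  exists_abs_gammaRatio_sub_one_add_le (by linarith) hb (by linarith)
end

section
/- Let (c_m)_{m ≥ 0} be a sequence of real numbers with S := Σ_{m=0}^∞ |c_m| < ∞. For an integer j ≥ 1, a sign ε ∈ {−1, +1}, and θ ∈ ℝ define R_s(θ) = (1/2) Σ_{m ≥ 0, m ≠ j} ( c_{|j−m|} + ε·c_{j+m} ) / ( (j−m)(j+m) ) · sin((m−j)θ) and R_c(θ) = (1/2) Σ_{m ≥ 0, m ≠ j} ( c_{|j−m|} + ε·c_{j+m} ) / ( (j−m)(j+m) ) · cos((m−j)θ). Then: (i) both series converge absolutely for every θ; (ii) |R_s(θ)| ≤ 2S/j and |R_c(θ)| ≤ 2S/j for all θ; (iii) R_s and R_c are differentiable in θ, with derivatives given by termwise differentiation, and |R_s′(θ)| ≤ 2S/j, |R_c′(θ)| ≤ 2S/j for all θ. -/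
/-- Along `m ↦ |j - m|`, every index is hit at most twice, so the reindexed sum at most doubles. -/
theorem exists_hasSum_abs_comp_dist_le {c : ℕ → ℝ} (hc : Summable fun m => |c m|) (j : ℕ) :
    ∃ T, HasSum (fun m => |c (Nat.dist j m)|) T ∧ T ≤ 2 * ∑' m, |c m| := by
  have hshift : ∀ m, Nat.dist j (m + j) = m := fun m => by simp [Nat.dist]
  have hsum : Summable fun m => |c (Nat.dist j m)| := by
    rw [← summable_nat_add_iff j]
    simpa only [hshift] using hc
  refine ⟨_, hsum.hasSum, ?_⟩
  rw [← hsum.sum_add_tsum_nat_add j, two_mul]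
  simp only [hshift]
  have hinj : Set.InjOn (Nat.dist j) (Finset.range j) := by
    intro a ha b hb hab
    simp only [Finset.coe_range, Set.mem_Iio, Nat.dist] at ha hb hab
    omega
  have hfin := hc.sum_le_tsum ((Finset.range j).image (Nat.dist j)) fun _ _ => abs_nonneg _
  rw [Finset.sum_image hinj] at hfin
  linarith

theorem exists_hasSum_dist_add_le {c : ℕ → ℝ} (hc : Summable fun m => |c m|) {j : ℕ}
    (hj : 1 ≤ j) :
    ∃ U, HasSum (fun m => (|c (Nat.dist j m)| + |c (j + m)|) / (j : ℝ)) U ∧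
      1 / 2 * U ≤ 2 * (∑' m, |c m|) / j := by
  obtain ⟨T, hT, hTle⟩ := exists_hasSum_abs_comp_dist_le hc j
  have hinj : Function.Injective fun m => j + m := add_right_injective j
  have hle : ∑' m, |c (j + m)| ≤ ∑' m, |c m| :=
    tsum_comp_le_tsum_of_inj hc (fun _ => abs_nonneg _) hinj
  refine ⟨_, (hT.add (hc.comp_injective hinj).hasSum).div_const (j : ℝ), ?_⟩
  have hnn : 0 ≤ ∑' m, |c m| := tsum_nonneg fun _ => abs_nonneg _
  have hj' : (0 : ℝ) < j := by exact_mod_cast hj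
  rw [← mul_div_assoc]
  refine div_le_div_of_nonneg_right ?_ hj'.le
  simp only [Function.comp_def]
  linarith

theorem one_le_abs_natCast_sub {m j : ℕ} (h : m ≠ j) : (1 : ℝ) ≤ |(m : ℝ) - j| := by
  have : (1 : ℤ) ≤ |(m : ℤ) - j| := Int.one_le_abs (sub_ne_zero.2 (by exact_mod_cast h))
  exact_mod_cast this

theorem abs_div_mul_sub_le {j : ℕ} (hj : 1 ≤ j) {m : ℕ} {x y ε : ℝ} (hε : |ε| = 1) :
    |(x + ε * y) / (((j : ℝ) - m) * ((j : ℝ) + m)) * ((m : ℝ) - j)| ≤ (|x| + |y|) / j := by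
  have hj' : (0 : ℝ) < j := by exact_mod_cast hj
  rcases eq_or_ne m j with rfl | h
  · simp only [sub_self, mul_zero, abs_zero]
    positivity
  have hne : (j : ℝ) - m ≠ 0 := sub_ne_zero.2 (by exact_mod_cast h.symm)
  have hpos : (0 : ℝ) < (j : ℝ) + m := by positivity
  have heq : (x + ε * y) / (((j : ℝ) - m) * ((j : ℝ) + m)) * ((m : ℝ) - j)
      = -((x + ε * y) / ((j : ℝ) + m)) := by
    field_simp
    ring
  rw [heq, abs_neg, abs_div, abs_of_pos hpos]
  have hnum : |x + ε * y| ≤ |x| + |y| := by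
    simpa [abs_mul, hε] using abs_add_le x (ε * y)
  gcongr
  simp

theorem abs_div_le_abs_div_mul_sub {j m : ℕ} {z : ℝ} :
    |z / (((j : ℝ) - m) * ((j : ℝ) + m))| ≤
      |z / (((j : ℝ) - m) * ((j : ℝ) + m)) * ((m : ℝ) - j)| := by
  rcases eq_or_ne m j with rfl | h
  · simp
  rw [abs_mul]
  exact le_mul_of_one_le_right (abs_nonneg _) (one_le_abs_natCast_sub h)

theorem abs_half_mul_tsum_le {f u : ℕ → ℝ} {U B : ℝ} (hu : HasSum u U) (hU : 1 / 2 * U ≤ B)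
    (h : ∀ m, |f m| ≤ u m) : |1 / 2 * ∑' m, f m| ≤ B := by
  have := tsum_of_norm_bounded (f := f) hu h
  rw [Real.norm_eq_abs] at this
  rw [abs_mul, abs_of_pos one_half_pos]
  linarith

/-- Let `(c_m)` be absolutely summable with sum `S`, let `j ≥ 1`, `ε ∈ {−1,+1}`, and let
`R_s(θ) = (1/2) Σ_{m ≠ j} (c_{|j−m|} + ε c_{j+m})/((j−m)(j+m)) · sin((m−j)θ)`,
`R_c(θ) = (1/2) Σ_{m ≠ j} (c_{|j−m|} + ε c_{j+m})/((j−m)(j+m)) · cos((m−j)θ)`.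
(The `m = j` term is interpreted as `0`, consistently with Lean's `x / 0 = 0`.)
Then both series converge absolutely, `|R_s|, |R_c| ≤ 2S/j`, and `R_s, R_c` are
differentiable with derivatives given by termwise differentiation, also bounded by `2S/j`. -/
theorem perturbation_remainder_bounds
    (c : ℕ → ℝ) (hc : Summable fun m => |c m|) (S : ℝ) (hS : S = ∑' m, |c m|)
    (j : ℕ) (hj : 1 ≤ j) (ε : ℝ) (hε : ε = -1 ∨ ε = 1)
    (coef : ℕ → ℝ)
    (hcoef : ∀ m, coef m =
      (c (Nat.dist j m) + ε * c (j + m)) / (((j : ℝ) - m) * ((j : ℝ) + m)))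
    (Rs Rc : ℝ → ℝ)
    (hRs : ∀ θ, Rs θ = (1 / 2) * ∑' m, coef m * Real.sin (((m : ℝ) - j) * θ))
    (hRc : ∀ θ, Rc θ = (1 / 2) * ∑' m, coef m * Real.cos (((m : ℝ) - j) * θ)) :
    (∀ θ : ℝ, Summable fun m => |coef m * Real.sin (((m : ℝ) - j) * θ)|) ∧
    (∀ θ : ℝ, Summable fun m => |coef m * Real.cos (((m : ℝ) - j) * θ)|) ∧
    (∀ θ : ℝ, |Rs θ| ≤ 2 * S / j) ∧
    (∀ θ : ℝ, |Rc θ| ≤ 2 * S / j) ∧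
    (∀ θ : ℝ, HasDerivAt Rs
      ((1 / 2) * ∑' m, coef m * (((m : ℝ) - j) * Real.cos (((m : ℝ) - j) * θ))) θ) ∧
    (∀ θ : ℝ, HasDerivAt Rc
      ((1 / 2) * ∑' m, coef m * (-((m : ℝ) - j) * Real.sin (((m : ℝ) - j) * θ))) θ) ∧
    (∀ θ : ℝ, |deriv Rs θ| ≤ 2 * S / j) ∧
    (∀ θ : ℝ, |deriv Rc θ| ≤ 2 * S / j) := by
  obtain ⟨U, hu, hU⟩ := exists_hasSum_dist_add_le hc hj
  rw [← hS] at hU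
  have hε' : |ε| = 1 := by rcases hε with rfl | rfl <;> simp
  have hderiv_coef (m : ℕ) : |coef m * ((m : ℝ) - j)| ≤
      (|c (Nat.dist j m)| + |c (j + m)|) / (j : ℝ) := by
    rw [hcoef]
    exact abs_div_mul_sub_le hj hε'
  have hcoef_le (m : ℕ) : |coef m| ≤ (|c (Nat.dist j m)| + |c (j + m)|) / (j : ℝ) := by
    refine le_trans ?_ (hderiv_coef m)
    rw [hcoef]
    exact abs_div_le_abs_div_mul_sub
  have hmul {a t b : ℝ} (ha : |a| ≤ b) (ht : |t| ≤ 1) : |a * t| ≤ b := by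
    rw [abs_mul]
    exact (mul_le_of_le_one_right (abs_nonneg a) ht).trans ha
  have hs (θ : ℝ) (m : ℕ) := hmul (hcoef_le m) (Real.abs_sin_le_one (((m : ℝ) - j) * θ))
  have hcs (θ : ℝ) (m : ℕ) := hmul (hcoef_le m) (Real.abs_cos_le_one (((m : ℝ) - j) * θ))
  have hs' (θ : ℝ) (m : ℕ) : |coef m * (((m : ℝ) - j) * Real.cos (((m : ℝ) - j) * θ))| ≤
      (|c (Nat.dist j m)| + |c (j + m)|) / (j : ℝ) := by
    rw [← mul_assoc]
    exact hmul (hderiv_coef m) (Real.abs_cos_le_one _)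
  have hcs' (θ : ℝ) (m : ℕ) : |coef m * (-((m : ℝ) - j) * Real.sin (((m : ℝ) - j) * θ))| ≤
      (|c (Nat.dist j m)| + |c (j + m)|) / (j : ℝ) := by
    rw [neg_mul, mul_neg, abs_neg, ← mul_assoc]
    exact hmul (hderiv_coef m) (Real.abs_sin_le_one _)
  have hsum_s (θ : ℝ) : Summable fun m => |coef m * Real.sin (((m : ℝ) - j) * θ)| :=
    hu.summable.of_nonneg_of_le (fun _ => abs_nonneg _) (hs θ)
  have hsum_c (θ : ℝ) : Summable fun m => |coef m * Real.cos (((m : ℝ) - j) * θ)| :=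
    hu.summable.of_nonneg_of_le (fun _ => abs_nonneg _) (hcs θ)
  have hlin (m : ℕ) (θ : ℝ) : HasDerivAt (fun t : ℝ => ((m : ℝ) - j) * t) ((m : ℝ) - j) θ := by
    simpa using (hasDerivAt_id θ).const_mul ((m : ℝ) - j)
  have hRs' (θ : ℝ) : HasDerivAt Rs
      ((1 / 2) * ∑' m, coef m * (((m : ℝ) - j) * Real.cos (((m : ℝ) - j) * θ))) θ := by
    rw [funext hRs]
    refine (hasDerivAt_tsum (g := fun m t => coef m * Real.sin (((m : ℝ) - j) * t)) (y₀ := 0)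
      hu.summable (fun m t => ?_) (fun m t => hs' t m) (hsum_s 0).of_abs θ).const_mul _
    exact ((hlin m t).sin.const_mul (coef m)).congr_deriv (by ring)
  have hRc' (θ : ℝ) : HasDerivAt Rc
      ((1 / 2) * ∑' m, coef m * (-((m : ℝ) - j) * Real.sin (((m : ℝ) - j) * θ))) θ := by
    rw [funext hRc]
    refine (hasDerivAt_tsum (g := fun m t => coef m * Real.cos (((m : ℝ) - j) * t)) (y₀ := 0)
      hu.summable (fun m t => ?_) (fun m t => hcs' t m) (hsum_c 0).of_abs θ).const_mul _
    exact ((hlin m t).cos.const_mul (coef m)).congr_deriv (by ring)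
  refine ⟨hsum_s, hsum_c, fun θ => ?_, fun θ => ?_, hRs', hRc', fun θ => ?_, fun θ => ?_⟩
  · rw [hRs]
    exact abs_half_mul_tsum_le hu hU (hs θ)
  · rw [hRc]
    exact abs_half_mul_tsum_le hu hU (hcs θ)
  · rw [(hRs' θ).deriv]
    exact abs_half_mul_tsum_le hu hU (hs' θ)
  · rw [(hRc' θ).deriv]
    exact abs_half_mul_tsum_le hu hU (hcs' θ)
end
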